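/- arXiv:0905.1863 — 2 statements merged into one kernel-verified Lean document; each statement's English description precedes it below -/
import Mathlib

section
/- Assume F satisfies Assumption F, that μ and σ are bounded, Lipschitz in x uniformly in t and (1/2)-Hölder continuous in t uniformly in x, σ is invertible with bounded inverse, and that g : ℝ^d → ℝ is bounded and Lipschitz. Then the discrete-time approximations are (1/2)-Hölder continuous in time uniformly in h: there exists a constant C > 0, independent of n, such that |v^h(t_i, x) − v^h(t_j, x)| ≤ C·(t_j − t_i)^{1/2} for all grid times t_i ≤ t_j and all x ∈ ℝ^d. -/
/-!
The argument rests on one-step estimates whose constants grow by factors `1 + O(h)` only.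

By the mean value theorem the increment of the one-step operator between two points, or between two
functions, is bounded by a linear functional `ψ ↦ ∫ ψ(X(z)) wt(z) dγ(z)` with `γ` the standard
Gaussian law (`Coeff.step_diff`), where
`wt(z) = 1 + h r + √h q·z + (z·Bz - tr B)`, `q = σ⁻¹ F_p`, `B = σ⁻¹ F_γ σ⁻ᵀ`. The trace condition and
the lower bound in the assumption on `F` give `wt ≥ -O(h)` and `B ≥ 0`, while `∫ wt dγ = 1 + h r`.
Hence the operator is stable in the sup norm (`Coeff.step_stab`), and bounds of the form
`|ψ(y) - c| ≤ A + b |y - x₀|²` propagate with errors of order `h` (`Coeff.step_quad`), because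
`∫ |X(z) - x₀|² wt(z) dγ = (1 + O(h)) |x - x₀|² + O(h)`.

The Lipschitz estimate (`Coeff.step_lip`) is the delicate one, since the weight depends on `x`
through `σ(x)⁻¹` and its derivative is of order one. For smooth `ψ`, Gaussian integration by parts
(`stein_affine`) moves that derivative onto `ψ`, so the derivative of the linear functional in the
direction `e` is `∫ Dψ(X(z)) · gradVec(z) dγ` with
`gradVec = wt (e + h Δμ + √h Δσ z) - h Ξ q - 2 √h Ξ B z` and `Ξ = σ σ'⁻¹ Δσ`, up to errors quadratic in `e`
(`Coeff.linStep_local`; `σ'` is the value at the second point).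
The Euclidean length of `gradVec` is at most `|e| wt` plus a term odd in `z` and terms of order `h`:
the dangerous contribution of `√h Ξ B z` is absorbed with `|Bz|² ≤ z·Bz ≤ 2 (wt + O(h))`
(`WtOK.grad_bound`). Subdividing segments removes the quadratic errors, and mollification
(`exists_smooth`) extends the estimate to all bounded Lipschitz functions.

A discrete Gronwall argument bounds the scheme and its Lipschitz constant uniformly in `n`
(`Coeff.scheme_bounds`). The time regularity then follows by propagating
`|v(t_j, y) - v(t_j, x)| ≤ Λ |y - x| ≤ Λ √τ / 2 + Λ |y - x|² / (2 √τ)` from `t_j` back to `t_i`, with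
`τ = t_j - t_i`, and evaluating at `y = x` (`Coeff.scheme_holder`).
-/

open MeasureTheory ProbabilityTheory Matrix Real Set Function

noncomputable section

attribute [local instance] Matrix.normedAddCommGroup Matrix.normedSpace

abbrev Vec (d : ℕ) := Fin d → ℝ
abbrev Mat (d : ℕ) := Matrix (Fin d) (Fin d) ℝ

/-- Law of the Gaussian vector `W_h` in `ℝ^d`, centered with covariance `h · I_d`. -/
def gaussVec (d : ℕ) (h : ℝ) : Measure (Vec d) :=
  Measure.pi fun _ => gaussianReal 0 h.toNNReal

/-- One step Euler scheme `X̂_h^{t,x} = x + μ(t,x) h + σ(t,x) W_h`. -/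
def euler {d : ℕ} (μ : ℝ → Vec d → Vec d) (σ : ℝ → Vec d → Mat d)
    (h t : ℝ) (x w : Vec d) : Vec d :=
  x + h • μ t x + (σ t x).mulVec w

/-- Weight `H_1^h(t,x) = (σ(t,x)ᵀ)⁻¹ W_h / h`. -/
def H1w {d : ℕ} (σ : ℝ → Vec d → Mat d) (h t : ℝ) (x w : Vec d) : Vec d :=
  (1 / h) • ((σ t x)ᵀ⁻¹.mulVec w)

/-- Weight `H_2^h(t,x) = (σ(t,x)ᵀ)⁻¹ (W_h W_hᵀ − h I_d) σ(t,x)⁻¹ / h²`. -/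
def H2w {d : ℕ} (σ : ℝ → Vec d → Mat d) (h t : ℝ) (x w : Vec d) : Mat d :=
  (1 / h ^ 2) • ((σ t x)ᵀ⁻¹ * (vecMulVec w w - h • (1 : Mat d)) * (σ t x)⁻¹)

/-- One-step operator acting on the next-time function `ψ`. -/
def step {d : ℕ} (F : ℝ → Vec d → ℝ → Vec d → Mat d → ℝ)
    (μ : ℝ → Vec d → Vec d) (σ : ℝ → Vec d → Mat d)
    (h t : ℝ) (ψ : Vec d → ℝ) (x : Vec d) : ℝ :=
  (∫ w, ψ (euler μ σ h t x w) ∂gaussVec d h)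
    + h * F t x (∫ w, ψ (euler μ σ h t x w) ∂gaussVec d h)
        (fun i => ∫ w, ψ (euler μ σ h t x w) * H1w σ h t x w i ∂gaussVec d h)
        (Matrix.of fun i j => ∫ w, ψ (euler μ σ h t x w) * H2w σ h t x w i j ∂gaussVec d h)

/-- The operator `T_h[ψ](t,x)`. -/
def Th {d : ℕ} (F : ℝ → Vec d → ℝ → Vec d → Mat d → ℝ)
    (μ : ℝ → Vec d → Vec d) (σ : ℝ → Vec d → Mat d)
    (ψ : ℝ → Vec d → ℝ) (h t : ℝ) (x : Vec d) : ℝ :=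
  step F μ σ h t (ψ (t + h)) x

/-- Assumption F of the paper, with explicit partial derivatives `Fr, Fp, Fγ` of `F`
in the variables `(r,p,γ)`. -/
structure AssumptionF (d : ℕ) (σ : ℝ → Vec d → Mat d)
    (F : ℝ → Vec d → ℝ → Vec d → Mat d → ℝ)
    (Fr : ℝ → Vec d → ℝ → Vec d → Mat d → ℝ)
    (Fp : ℝ → Vec d → ℝ → Vec d → Mat d → Vec d)
    (Fγ : ℝ → Vec d → ℝ → Vec d → Mat d → Mat d) : Prop where
  lipschitz : ∃ L : ℝ, 0 ≤ L ∧ ∀ t x x' r r' p p' γ γ',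
    |F t x r p γ - F t x' r' p' γ'| ≤ L * (‖x - x'‖ + |r - r'| + ‖p - p'‖ + ‖γ - γ'‖)
  bound_at_zero : ∃ C : ℝ, ∀ t x, |F t x 0 0 0| ≤ C
  differentiable : ∀ t x r p γ, DifferentiableAt ℝ
    (fun q : ℝ × Vec d × Mat d => F t x q.1 q.2.1 q.2.2) (r, p, γ)
  deriv_eq : ∀ t x r p γ (dq : ℝ × Vec d × Mat d),
    fderiv ℝ (fun q : ℝ × Vec d × Mat d => F t x q.1 q.2.1 q.2.2) (r, p, γ) dq
      = Fr t x r p γ * dq.1 + Fp t x r p γ ⬝ᵥ dq.2.1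
        + ∑ i, ∑ j, Fγ t x r p γ i j * dq.2.2 i j
  psd : ∀ t x r p γ, (Fγ t x r p γ).PosSemidef
  trace_le_one : ∀ t x r p γ, ((σ t x * (σ t x)ᵀ)⁻¹ * Fγ t x r p γ).trace ≤ 1
  lower_bound : ∃ K : ℝ, 0 ≤ K ∧ ∀ t x r p γ (w : Vec d),
    Fp t x r p γ ⬝ᵥ w + w ⬝ᵥ (Fγ t x r p γ).mulVec w ≥ -K

/-- The backward scheme: `schemeAux … k` is the approximation with `k` time steps
remaining before the horizon `T` (so it corresponds to time `T − k·(T/n)`). -/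
def schemeAux {d : ℕ} (T : ℝ) (F : ℝ → Vec d → ℝ → Vec d → Mat d → ℝ)
    (μ : ℝ → Vec d → Vec d) (σ : ℝ → Vec d → Mat d) (g : Vec d → ℝ) (n : ℕ) :
    ℕ → Vec d → ℝ
  | 0 => g
  | (k + 1) => step F μ σ (T / n) (T - (k + 1) * (T / n)) (schemeAux T F μ σ g n k)

/-- The discrete time approximation `v^h(t_i, ·)` with `h = T/n` and `t_i = i·T/n`:
`v^h(t_n,·) = g` and `v^h(t_i,·) = T_h[v^h](t_i,·)`. -/
def vh {d : ℕ} (T : ℝ) (F : ℝ → Vec d → ℝ → Vec d → Mat d → ℝ)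
    (μ : ℝ → Vec d → Vec d) (σ : ℝ → Vec d → Mat d) (g : Vec d → ℝ) (n i : ℕ) :
    Vec d → ℝ :=
  schemeAux T F μ σ g n (n - i)

/-! ### The standard Gaussian measure -/

instance instProbGaussVec (d : ℕ) (h : ℝ) : IsProbabilityMeasure (gaussVec d h) := by
  unfold gaussVec; infer_instance

/-- `W_h` has the law of `√h Z` with `Z` a standard Gaussian vector. -/
lemma gaussVec_eq_map (d : ℕ) {h : ℝ} (hh : 0 ≤ h) :
    gaussVec d h = (gaussVec d 1).map (fun z => √h • z) := by
  unfold gaussVec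
  have := Measure.pi_map_pi (ι := Fin d) (μ := fun _ => gaussianReal 0 (1:ℝ).toNNReal)
    (f := fun _ x => √h * x) (fun i => by fun_prop)
  have e : (fun z : Vec d => √h • z) = (fun x i => √h * x i) := by
    ext z i; simp
  rw [e, this]
  congr 1
  ext1 i
  rw [gaussianReal_map_const_mul]
  congr 1
  · simp
  · ext; simp [Real.sq_sqrt hh, hh]

lemma integral_gaussVec (d : ℕ) {h : ℝ} (hh : 0 ≤ h) (f : Vec d → ℝ) (hf : Continuous f) :
    ∫ w, f w ∂gaussVec d h = ∫ z, f (√h • z) ∂gaussVec d 1 := by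
  rw [gaussVec_eq_map d hh, integral_map (by fun_prop) hf.aestronglyMeasurable]

lemma gaussVec_neg (d : ℕ) : (gaussVec d 1).map (fun z => -z) = gaussVec d 1 := by
  unfold gaussVec
  have := Measure.pi_map_pi (ι := Fin d) (μ := fun _ => gaussianReal 0 (1:ℝ).toNNReal)
    (f := fun _ x => -x) (fun i => by fun_prop)
  have e : (fun z : Vec d => -z) = (fun x i => - x i) := by
    ext z i; simp
  rw [e, this]
  congr 1
  ext1 i
  rw [gaussianReal_map_neg]
  simp

lemma integral_odd {d : ℕ} (f : Vec d → ℝ) (hf : Continuous f) (hodd : ∀ z, f (-z) = - f z) :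
    ∫ z, f z ∂gaussVec d 1 = 0 := by
  have h1 : ∫ z, f z ∂gaussVec d 1 = ∫ z, f (-z) ∂gaussVec d 1 := by
    conv_lhs => rw [← gaussVec_neg d]
    rw [integral_map (by fun_prop) hf.aestronglyMeasurable]
  simp only [hodd, integral_neg] at h1
  linarith

lemma integrable_one_add_norm_pow (d k : ℕ) :
    Integrable (fun z : Vec d => (1 + ‖z‖) ^ k) (gaussVec d 1) := by
  rcases Nat.eq_zero_or_pos k with rfl | hk
  · simp
  have h1 : MemLp (fun z : Vec d => z) (k : ENNReal) (gaussVec d 1) := by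
    rw [memLp_pi_iff]
    intro i
    have := (memLp_id_gaussianReal' (μ := 0) (v := (1:ℝ).toNNReal) (k : ENNReal) (by simp))
    exact this.comp_measurePreserving (measurePreserving_eval _ i)
  have h2 : MemLp (fun z : Vec d => 1 + ‖z‖) (k : ENNReal) (gaussVec d 1) :=
    (memLp_const (1:ℝ)).add h1.norm
  have h3 := h2.integrable_norm_pow hk.ne'
  refine h3.congr (Filter.Eventually.of_forall fun z => ?_)
  simp only [Real.norm_eq_abs]
  rw [abs_of_nonneg (by positivity)]

lemma integrable_of_poly {d : ℕ} {f : Vec d → ℝ} (hf : Continuous f) (C : ℝ) (k : ℕ)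
    (hb : ∀ z, |f z| ≤ C * (1 + ‖z‖) ^ k) : Integrable f (gaussVec d 1) := by
  refine ((integrable_one_add_norm_pow d k).const_mul C).mono' hf.aestronglyMeasurable ?_
  exact Filter.Eventually.of_forall hb

/-- One-dimensional Gaussian integration by parts. -/
lemma stein_real (f f' : ℝ → ℝ) (hd : ∀ t, HasDerivAt f (f' t) t)
    (h0 : Integrable f (gaussianReal 0 (1:ℝ).toNNReal))
    (h1 : Integrable f' (gaussianReal 0 (1:ℝ).toNNReal))
    (h2 : Integrable (fun t => t * f t) (gaussianReal 0 (1:ℝ).toNNReal)) :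
    ∫ t, t * f t ∂gaussianReal 0 (1:ℝ).toNNReal = ∫ t, f' t ∂gaussianReal 0 (1:ℝ).toNNReal := by
  have hne : (1:ℝ).toNNReal ≠ 0 := by simp
  have key : ∀ u : ℝ → ℝ, Integrable u (gaussianReal 0 (1:ℝ).toNNReal) →
      Integrable (fun t => u t * gaussianPDFReal 0 (1:ℝ).toNNReal t) := by
    intro u hu
    rw [gaussianReal_of_var_ne_zero _ hne] at hu
    rw [integrable_withDensity_iff_integrable_smul₀' (measurable_gaussianPDF _ _).aemeasurable
      (Filter.Eventually.of_forall fun _ => gaussianPDF_lt_top)] at hu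
    refine hu.congr (Filter.Eventually.of_forall fun t => ?_)
    simp [toReal_gaussianPDF, mul_comm]
  rw [integral_gaussianReal_eq_integral_smul hne, integral_gaussianReal_eq_integral_smul hne]
  have hpdf : ∀ t, HasDerivAt (gaussianPDFReal 0 (1:ℝ).toNNReal)
      (- (t * gaussianPDFReal 0 (1:ℝ).toNNReal t)) t := by
    intro t
    unfold gaussianPDFReal
    have : HasDerivAt (fun x : ℝ => -(x - 0) ^ 2 / (2 * ((1:ℝ).toNNReal : ℝ))) (-t) t := by
      have := (((hasDerivAt_id' t).sub_const 0).fun_pow 2).fun_neg.div_const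
        (2 * ((1:ℝ).toNNReal : ℝ))
      refine this.congr_deriv ?_
      simp; ring
    have := (this.exp).const_mul ((√(2 * π * ((1:ℝ).toNNReal : ℝ)))⁻¹)
    refine this.congr_deriv ?_
    ring
  have e := integral_mul_deriv_eq_deriv_mul_of_integrable (u := f) (u' := f')
    (v := gaussianPDFReal 0 (1:ℝ).toNNReal) (v' := fun t => - (t * gaussianPDFReal 0 (1:ℝ).toNNReal t))
    (fun t _ => hd t) (fun t _ => hpdf t)
    ((key _ h2).neg.congr (Filter.Eventually.of_forall fun t => by simp; ring))
    (key _ h1) (key _ h0)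
  have e1 : ∫ t, gaussianPDFReal 0 (1:ℝ).toNNReal t • (t * f t)
      = - ∫ t, f t * (- (t * gaussianPDFReal 0 (1:ℝ).toNNReal t)) := by
    rw [← integral_neg]; congr 1; ext t; simp; ring
  rw [e1, e, neg_neg]
  congr 1; ext t; simp [mul_comm]

/-- Gaussian integration by parts in the `i`-th coordinate. -/
lemma stein_coord {d : ℕ} (i : Fin d) (f f' : Vec d → ℝ)
    (hd : ∀ (z : Vec d) (t : ℝ), HasDerivAt (fun t => f (Function.update z i t))
      (f' (Function.update z i t)) t)
    (h0 : Integrable f (gaussVec d 1)) (h1 : Integrable f' (gaussVec d 1))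
    (h2 : Integrable (fun z => z i * f z) (gaussVec d 1)) :
    ∫ z, z i * f z ∂gaussVec d 1 = ∫ z, f' z ∂gaussVec d 1 := by
  obtain _ | n := d
  · exact i.elim0
  have mp := (measurePreserving_piFinSuccAbove
    (fun _ : Fin (n+1) => gaussianReal 0 (1:ℝ).toNNReal) i).symm
  have me := (MeasurableEquiv.piFinSuccAbove (fun _ : Fin (n+1) => ℝ) i).symm.measurableEmbedding
  have red : ∀ u : Vec (n+1) → ℝ, Integrable u (gaussVec (n+1) 1) →
      Integrable (fun q : (Fin n → ℝ) × ℝ => u (i.insertNth q.2 q.1))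
        ((gaussVec n 1).prod (gaussianReal 0 (1:ℝ).toNNReal)) ∧
      ∫ z, u z ∂gaussVec (n+1) 1
        = ∫ y, ∫ t, u (i.insertNth t y) ∂gaussianReal 0 (1:ℝ).toNNReal ∂gaussVec n 1 := by
    intro u hu
    have a1 := (mp.integrable_comp_emb me).2 hu
    have a2 := a1.swap
    refine ⟨a2, ?_⟩
    refine Eq.trans ?_ (integral_prod _ a2)
    refine (mp.integral_comp me u).symm.trans ?_
    exact (integral_prod_swap _).symm
  obtain ⟨i1, e1⟩ := red _ h1
  obtain ⟨i2, e2⟩ := red _ h2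
  obtain ⟨i0, -⟩ := red _ h0
  rw [e1, e2]
  apply integral_congr_ae
  filter_upwards [i1.prod_right_ae, i2.prod_right_ae, i0.prod_right_ae] with y j1 j2 j0
  simp only [Fin.insertNth_apply_same] at j2 ⊢
  refine stein_real _ _ (fun t => ?_) j0 j1 j2
  have := hd (i.insertNth 0 y) t
  simpa [Fin.update_insertNth] using this

/-! ### Entrywise bounds and the Euclidean length -/

lemma abs_dot_le {d : ℕ} (u v : Vec d) : |u ⬝ᵥ v| ≤ d * ‖u‖ * ‖v‖ := by
  unfold dotProduct
  refine (Finset.abs_sum_le_sum_abs _ _).trans ?_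
  refine (Finset.sum_le_card_nsmul _ _ (‖u‖ * ‖v‖) fun i _ => ?_).trans ?_
  · rw [abs_mul]
    exact mul_le_mul (norm_le_pi_norm u i) (norm_le_pi_norm v i) (abs_nonneg _) (norm_nonneg _)
  · simp [mul_assoc]

lemma norm_mulVec_le {d : ℕ} (A : Mat d) (v : Vec d) : ‖A *ᵥ v‖ ≤ d * ‖A‖ * ‖v‖ := by
  refine (pi_norm_le_iff_of_nonneg (by positivity)).2 fun i => ?_
  refine (abs_dot_le (A i) v).trans ?_
  have : ‖A i‖ ≤ ‖A‖ := norm_le_pi_norm A i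
  gcongr

lemma norm_matmul_le {d : ℕ} (A B : Mat d) : ‖A * B‖ ≤ d * ‖A‖ * ‖B‖ := by
  refine (Matrix.norm_le_iff (by positivity)).2 fun i j => ?_
  rw [Matrix.mul_apply]
  refine (abs_dot_le (A i) (fun k => B k j)).trans ?_
  have h1 : ‖A i‖ ≤ ‖A‖ := norm_le_pi_norm A i
  have h2 : ‖fun k => B k j‖ ≤ ‖B‖ :=
    (pi_norm_le_iff_of_nonneg (norm_nonneg _)).2 fun k => Matrix.norm_entry_le_entrywise_sup_norm B
  gcongr

lemma abs_trace_le {d : ℕ} (A : Mat d) : |A.trace| ≤ d * ‖A‖ := by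
  unfold Matrix.trace
  refine (Finset.abs_sum_le_sum_abs _ _).trans ?_
  refine (Finset.sum_le_card_nsmul _ _ (‖A‖) fun i _ => ?_).trans ?_
  · exact Matrix.norm_entry_le_entrywise_sup_norm A
  · simp

/-- Euclidean length of a vector; the ambient norm on `Vec d` is the sup norm. -/
def e2 {d : ℕ} (v : Vec d) : ℝ := √(v ⬝ᵥ v)

lemma dot_self_nonneg {d : ℕ} (v : Vec d) : 0 ≤ v ⬝ᵥ v :=
  Finset.sum_nonneg fun i _ => mul_self_nonneg (v i)

lemma e2_nonneg {d : ℕ} (v : Vec d) : 0 ≤ e2 v := Real.sqrt_nonneg _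

lemma e2_sq {d : ℕ} (v : Vec d) : e2 v ^ 2 = v ⬝ᵥ v := Real.sq_sqrt (dot_self_nonneg v)

lemma norm_le_e2 {d : ℕ} (v : Vec d) : ‖v‖ ≤ e2 v := by
  refine (pi_norm_le_iff_of_nonneg (e2_nonneg v)).2 fun i => ?_
  rw [Real.norm_eq_abs]
  apply Real.abs_le_sqrt
  rw [sq]
  exact Finset.single_le_sum (f := fun i => v i * v i) (fun j _ => mul_self_nonneg (v j))
    (Finset.mem_univ i)

lemma dot_self_le {d : ℕ} (v : Vec d) : v ⬝ᵥ v ≤ d * ‖v‖ ^ 2 := by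
  have := (le_abs_self _).trans (abs_dot_le v v)
  rw [sq, ← mul_assoc]; exact this

lemma e2_le {d : ℕ} (v : Vec d) : e2 v ≤ (d + 1) * ‖v‖ := by
  apply Real.sqrt_le_iff.2 ⟨by positivity, (dot_self_le v).trans ?_⟩
  rw [mul_pow]
  gcongr
  have : (0:ℝ) ≤ d := by positivity
  nlinarith

lemma e2_smul {d : ℕ} {c : ℝ} (hc : 0 ≤ c) (v : Vec d) : e2 (c • v) = c * e2 v := by
  unfold e2
  rw [smul_dotProduct, dotProduct_smul, smul_eq_mul, smul_eq_mul, ← mul_assoc,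
    Real.sqrt_mul (by positivity), Real.sqrt_mul_self hc]

/-- `|Bz|² ≤ Tr(B) ⟨z, Bz⟩` for a positive semidefinite matrix. -/
lemma psd_mulVec_sq_le {d : ℕ} {B : Mat d} (hB : B.PosSemidef) (z : Vec d) :
    (B *ᵥ z) ⬝ᵥ (B *ᵥ z) ≤ B.trace * (z ⬝ᵥ B *ᵥ z) := by
  obtain ⟨Q, rfl⟩ : ∃ Q : Mat d, B = Qᴴ * Q := by
    open scoped MatrixOrder in
    exact (CStarAlgebra.nonneg_iff_eq_star_mul_self.1 hB.nonneg)
  rw [conjTranspose_eq_transpose_of_trivial]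
  have h1 : z ⬝ᵥ (Qᵀ * Q) *ᵥ z = (Q *ᵥ z) ⬝ᵥ (Q *ᵥ z) := by
    rw [← mulVec_mulVec, dotProduct_mulVec, vecMul_transpose]
  have h2 : (Qᵀ * Q).trace = ∑ i, ∑ k, Q k i ^ 2 := by
    simp [Matrix.trace, Matrix.mul_apply, sq]
  rw [h1, h2, Finset.sum_mul]
  refine Finset.sum_le_sum fun i _ => ?_
  have h3 : ((Qᵀ * Q) *ᵥ z) i = ∑ k, Q k i * (Q *ᵥ z) k := by
    rw [← mulVec_mulVec]; rfl
  rw [h3, ← sq]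
  refine (Finset.sum_mul_sq_le_sq_mul_sq _ _ _).trans_eq ?_
  congr 1
  simp [dotProduct, sq]

lemma psd_dot_nonneg {d : ℕ} {B : Mat d} (hB : B.PosSemidef) (z : Vec d) :
    0 ≤ z ⬝ᵥ B *ᵥ z := by
  simpa using hB.dotProduct_mulVec_nonneg z

/-- Gaussian integration by parts for the divergence of `Ψ(z) (c + N z)`. -/
lemma stein_affine {d : ℕ} (Ψ : Vec d → ℝ) (DΨ : Vec d → Vec d →L[ℝ] ℝ) {M M' : ℝ}
    (hd : ∀ z, HasFDerivAt Ψ (DΨ z) z) (hc : Continuous DΨ)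
    (hM : ∀ z, |Ψ z| ≤ M) (hM' : ∀ z, ‖DΨ z‖ ≤ M') (c : Vec d) (N : Mat d) :
    ∫ z, Ψ z * (z ⬝ᵥ (c + N *ᵥ z) - N.trace) ∂gaussVec d 1
      = ∫ z, DΨ z (c + N *ᵥ z) ∂gaussVec d 1 := by
  have hΨ : Continuous Ψ := continuous_iff_continuousAt.2 fun z => (hd z).continuousAt
  have M0 : 0 ≤ M := (abs_nonneg _).trans (hM 0)
  have M0' : 0 ≤ M' := (norm_nonneg _).trans (hM' 0)
  have hG : Continuous fun z : Vec d => c + N *ᵥ z := by fun_prop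
  obtain ⟨K, hK0, hK⟩ : ∃ K, 0 ≤ K ∧ ∀ z : Vec d, ‖c + N *ᵥ z‖ ≤ K * (1 + ‖z‖) := by
    refine ⟨‖c‖ + d * ‖N‖, by positivity, fun z => ?_⟩
    have h1 := norm_add_le c (N *ᵥ z)
    have h2 := norm_mulVec_le N z
    have h3 : 0 ≤ ‖c‖ * ‖z‖ := by positivity
    have h4 : 0 ≤ d * ‖N‖ := by positivity
    nlinarith
  have hKi : ∀ (z : Vec d) i, |(c + N *ᵥ z) i| ≤ K * (1 + ‖z‖) := fun z i =>
    (norm_le_pi_norm _ i).trans (hK z)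
  have hGi : ∀ i, Continuous fun z : Vec d => (c + N *ᵥ z) i := fun i =>
    (continuous_apply i).comp hG
  have hDi : ∀ i, Continuous fun z : Vec d => DΨ z (Pi.single i 1) := fun i => by fun_prop
  have bD : ∀ z i, |DΨ z (Pi.single i 1)| ≤ M' := by
    intro z i
    refine ((DΨ z).le_opNorm _).trans ?_
    have : ‖(Pi.single i 1 : Vec d)‖ ≤ 1 := by
      refine (pi_norm_le_iff_of_nonneg zero_le_one).2 fun j => ?_
      rw [Pi.single_apply]; split_ifs <;> simp
    exact (mul_le_mul (hM' z) this (norm_nonneg _) M0').trans_eq (mul_one _)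
  have I1 : ∀ i, Integrable (fun z : Vec d => z i * (Ψ z * (c + N *ᵥ z) i)) (gaussVec d 1) := by
    intro i
    refine integrable_of_poly ((continuous_apply i).mul (hΨ.mul (hGi i))) (M * K) 2 fun z => ?_
    rw [abs_mul, abs_mul]
    have h1 : |z i| ≤ 1 + ‖z‖ := (norm_le_pi_norm z i).trans (by linarith)
    calc |z i| * (|Ψ z| * |(c + N *ᵥ z) i|) ≤ (1 + ‖z‖) * (M * (K * (1 + ‖z‖))) := by
          gcongr
          · exact hM z
          · exact hKi z i
      _ = _ := by ring
  have I2 : ∀ i, Integrable (fun z : Vec d => DΨ z (Pi.single i 1) * (c + N *ᵥ z) i)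
      (gaussVec d 1) := by
    intro i
    refine integrable_of_poly ((hDi i).mul (hGi i)) (M' * K) 1 fun z => ?_
    rw [abs_mul]
    calc _ ≤ M' * (K * (1 + ‖z‖)) := by
          gcongr
          · exact bD z i
          · exact hKi z i
      _ = _ := by ring
  have I3 : ∀ i, Integrable (fun z : Vec d => Ψ z * N i i) (gaussVec d 1) := by
    intro i
    refine integrable_of_poly (hΨ.mul continuous_const) (M * |N i i|) 0 fun z => ?_
    rw [abs_mul, pow_zero, mul_one]
    gcongr
    exact hM z
  have st : ∀ i, ∫ z : Vec d, z i * (Ψ z * (c + N *ᵥ z) i) ∂gaussVec d 1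
      = ∫ z : Vec d, (DΨ z (Pi.single i 1) * (c + N *ᵥ z) i + Ψ z * N i i) ∂gaussVec d 1 := by
    intro i
    refine stein_coord i _ _ (fun z t => ?_) ?_ ((I2 i).add (I3 i)) (I1 i)
    · have hu : HasDerivAt (fun t => Function.update z i t) (Pi.single i (1:ℝ)) t :=
        hasDerivAt_update z i t
      have h1 : HasDerivAt (fun t => Ψ (Function.update z i t))
          (DΨ (Function.update z i t) (Pi.single i 1)) t :=
        (hd _).comp_hasDerivAt t hu
      have h2 : HasDerivAt (fun t => (c + N *ᵥ (Function.update z i t)) i) (N i i) t := by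
        have h3 : HasDerivAt (fun t => N *ᵥ (Function.update z i t)) (N *ᵥ (Pi.single i (1:ℝ))) t :=
          ((N.mulVecLin.toContinuousLinearMap).hasFDerivAt).comp_hasDerivAt t hu
        have h4 := (hasDerivAt_pi.1 h3 i).const_add (c i)
        simpa using h4
      exact h1.mul h2
    · refine integrable_of_poly (hΨ.mul (hGi i)) (M * K) 1 fun z => ?_
      rw [abs_mul]
      calc _ ≤ M * (K * (1 + ‖z‖)) := by
            gcongr
            · exact hM z
            · exact hKi z i
        _ = _ := by ring
  have lhs : ∀ z, Ψ z * (z ⬝ᵥ (c + N *ᵥ z) - N.trace)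
      = ∑ i, (z i * (Ψ z * (c + N *ᵥ z) i) - Ψ z * N i i) := by
    intro z
    rw [Finset.sum_sub_distrib, mul_sub]
    congr 1
    · rw [dotProduct, Finset.mul_sum]
      exact Finset.sum_congr rfl fun i _ => by ring
    · rw [Matrix.trace, Finset.mul_sum]; rfl
  have rhs : ∀ z, DΨ z (c + N *ᵥ z) = ∑ i, DΨ z (Pi.single i 1) * (c + N *ᵥ z) i := by
    intro z
    conv_lhs => rw [pi_eq_sum_univ' (c + N *ᵥ z)]
    rw [map_sum]
    refine Finset.sum_congr rfl fun i _ => ?_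
    rw [map_smul, smul_eq_mul, mul_comm]
  simp_rw [lhs, rhs]
  have I4 : ∀ i, Integrable (fun z : Vec d => z i * (Ψ z * (c + N *ᵥ z) i) - Ψ z * N i i)
      (gaussVec d 1) := fun i => (I1 i).sub (I3 i)
  rw [integral_finsetSum _ fun i _ => I4 i, integral_finsetSum _ fun i _ => I2 i]
  refine Finset.sum_congr rfl fun i _ => ?_
  rw [integral_sub (I1 i) (I3 i), st i, integral_add (I2 i) (I3 i)]
  ring

/-! ### The one-step weight -/

/-- The weight through which the linearised one-step operator acts, written in terms of a standard
Gaussian vector `z = W_h / √h`, with `q = σ⁻¹ F_p`, `B = σ⁻¹ F_γ σ⁻ᵀ` and `r = F_r`. -/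
def wt {d : ℕ} (h r : ℝ) (q : Vec d) (B : Mat d) (z : Vec d) : ℝ :=
  1 + h * r + √h * (q ⬝ᵥ z) + (z ⬝ᵥ B *ᵥ z - B.trace)

/-- Conditions making `wt h r q B` nonnegative up to an error of order `h`; the single number `Q`
dominates the dimension, the time step and all coefficients. -/
structure WtOK {d : ℕ} (Q h r : ℝ) (q : Vec d) (B : Mat d) : Prop where
  hh : 0 < h
  hle : h ≤ Q
  Q1 : 1 ≤ Q
  dQ : (d : ℝ) ≤ Q
  hr : |r| ≤ Q
  hq : ‖q‖ ≤ Q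
  hB : ‖B‖ ≤ Q
  psd : B.PosSemidef
  tr : B.trace ≤ 1
  low : ∀ z : Vec d, -(Q * h) ≤ √h * (q ⬝ᵥ z) + z ⬝ᵥ B *ᵥ z

lemma continuous_wt {d : ℕ} (h r : ℝ) (q : Vec d) (B : Mat d) : Continuous (wt h r q B) := by
  unfold wt dotProduct
  fun_prop

lemma integral_wt {d : ℕ} (h r : ℝ) (q : Vec d) (B : Mat d) :
    Integrable (wt h r q B) (gaussVec d 1) ∧ ∫ z, wt h r q B z ∂gaussVec d 1 = 1 + h * r := by
  have hi : Integrable (fun z : Vec d => z ⬝ᵥ (√h • q + B *ᵥ z) - B.trace) (gaussVec d 1) := by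
    refine integrable_of_poly (by unfold dotProduct; fun_prop)
      (d * ‖√h • q‖ + d * d * ‖B‖ + d * ‖B‖) 2 fun z => ?_
    have h1 := abs_dot_le z (√h • q + B *ᵥ z)
    have h2 := norm_add_le (√h • q) (B *ᵥ z)
    have h3 := norm_mulVec_le B z
    have h4 := abs_trace_le B
    have h5 := abs_sub (z ⬝ᵥ (√h • q + B *ᵥ z)) B.trace
    have z0 := norm_nonneg z
    have e0 : (0:ℝ) ≤ d * ‖√h • q‖ := by positivity
    have e1 : (0:ℝ) ≤ d * ‖B‖ := by positivity
    have e2 : (0:ℝ) ≤ d * (d * ‖B‖) := by positivity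
    have h6 : d * ‖z‖ * ‖√h • q + B *ᵥ z‖ ≤ d * ‖z‖ * (‖√h • q‖ + d * ‖B‖ * ‖z‖) := by
      gcongr; linarith
    have k0 := mul_nonneg e0 z0
    have k1 := mul_nonneg e1 z0
    have k2 := mul_nonneg e2 z0
    have l0 := mul_nonneg k0 z0
    have l1 := mul_nonneg k1 z0
    have l2 := mul_nonneg k2 z0
    nlinarith
  have e : wt h r q B = fun z : Vec d => (1 + h * r) +
      (z ⬝ᵥ (√h • q + B *ᵥ z) - B.trace) := by
    ext z
    unfold wt
    rw [dotProduct_add, dotProduct_smul, dotProduct_comm z q, smul_eq_mul]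
    ring
  have hs := stein_affine (d := d) (fun _ => 1) (fun _ => 0) (M := 1) (M' := 0)
    (fun z => hasFDerivAt_const _ _) continuous_const (by simp) (by simp) (√h • q) B
  simp only [one_mul, _root_.zero_apply, integral_zero] at hs
  rw [e]
  refine ⟨(integrable_const _).add hi, ?_⟩
  rw [integral_add (integrable_const _) hi, hs]
  simp

section
variable {d : ℕ} {Q h r : ℝ} {q : Vec d} {B : Mat d}

lemma WtOK.sqrt_le (H : WtOK Q h r q B) : √h ≤ Q :=
  Real.sqrt_le_iff.2 ⟨zero_le_one.trans H.Q1, H.hle.trans (by nlinarith [H.Q1])⟩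

/-- The lower bound on `F_p · w + wᵀ F_γ w`, applied at `w / 2`, leaves half of the quadratic form
available. -/
lemma WtOK.low_half (H : WtOK Q h r q B) (z : Vec d) :
    (z ⬝ᵥ B *ᵥ z) / 2 + h ≤ wt h r q B z + 4 * Q * h := by
  have h1 := H.low ((1/2 : ℝ) • z)
  rw [mulVec_smul, dotProduct_smul, dotProduct_smul, smul_dotProduct] at h1
  simp only [smul_eq_mul] at h1
  have h2 := neg_le_of_abs_le H.hr
  have h3 := H.tr
  have h4 := H.hh
  have h5 := H.Q1
  unfold wt
  nlinarith

lemma WtOK.abs_wt_le (H : WtOK Q h r q B) (z : Vec d) :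
    |wt h r q B z| ≤ 4 * Q ^ 3 * (1 + ‖z‖) ^ 2 := by
  have Q1 := H.Q1
  have Q0 : 0 ≤ Q := zero_le_one.trans Q1
  have z0 := norm_nonneg z
  have h1 : |h * r| ≤ Q * Q := by
    rw [abs_mul, abs_of_pos H.hh]
    exact mul_le_mul H.hle H.hr (abs_nonneg _) Q0
  have h2 : |√h * (q ⬝ᵥ z)| ≤ Q * (Q * Q * ‖z‖) := by
    rw [abs_mul, abs_of_nonneg (Real.sqrt_nonneg h)]
    refine mul_le_mul H.sqrt_le ((abs_dot_le q z).trans ?_) (abs_nonneg _) Q0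
    gcongr
    · exact H.dQ
    · exact H.hq
  have h3 : |z ⬝ᵥ B *ᵥ z| ≤ Q * ‖z‖ * (Q * Q * ‖z‖) := by
    refine (abs_dot_le _ _).trans ?_
    gcongr
    · exact H.dQ
    · refine (norm_mulVec_le _ _).trans ?_
      gcongr
      · exact H.dQ
      · exact H.hB
  have h4 : |B.trace| ≤ Q * Q := by
    refine (abs_trace_le _).trans ?_
    gcongr
    · exact H.dQ
    · exact H.hB
  have h5 : |wt h r q B z| ≤ 1 + Q * Q + Q * (Q * Q * ‖z‖) + Q * ‖z‖ * (Q * Q * ‖z‖) + Q * Q := by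
    unfold wt
    rw [abs_le] at *
    constructor <;> linarith
  have h6 : 1 ≤ Q ^ 3 := one_le_pow₀ Q1
  have h7 : Q * Q ≤ Q ^ 3 := by nlinarith [mul_nonneg Q0 Q0]
  have h8 : 0 ≤ Q ^ 3 * ‖z‖ := by positivity
  have h9 : 0 ≤ Q ^ 3 * ‖z‖ ^ 2 := by positivity
  nlinarith

lemma WtOK.wt_even (z : Vec d) : wt h r q B (-z) - √h * (q ⬝ᵥ (-z))
    = wt h r q B z - √h * (q ⬝ᵥ z) := by
  unfold wt
  simp only [mulVec_neg, dotProduct_neg, neg_dotProduct, neg_neg]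
  ring

/-- Second moment of an affine displacement `e + h m + √h σ z` under the weight
`wt + 8 Q h ≥ 0`. -/
lemma WtOK.second_moment (H : WtOK Q h r q B) (e m : Vec d) (σ : Mat d)
    (hm : ‖m‖ ≤ Q) (hσ : ‖σ‖ ≤ Q) :
    ∫ z, (wt h r q B z + 8 * Q * h) *
        ((e + h • m + √h • (σ *ᵥ z)) ⬝ᵥ (e + h • m + √h • (σ *ᵥ z))) ∂gaussVec d 1
      ≤ (1 + (9 * Q + 38 * Q ^ 8 * ∫ z, (1 + ‖z‖) ^ 4 ∂gaussVec d 1) * h) * (e ⬝ᵥ e)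
        + (38 * Q ^ 8 * ∫ z, (1 + ‖z‖) ^ 4 ∂gaussVec d 1) * h := by
  have Q1 := H.Q1
  have Q0 : 0 ≤ Q := zero_le_one.trans Q1
  have hh := H.hh
  set s := √h with hs
  have s0 : 0 ≤ s := Real.sqrt_nonneg h
  have ss : s * s = h := Real.mul_self_sqrt hh.le
  have sQ : s ≤ Q := H.sqrt_le
  set ω : Vec d → ℝ := fun z => wt h r q B z + 8 * Q * h with hω
  set odd : Vec d → ℝ := fun z => 2 * s * (e ⬝ᵥ σ *ᵥ z) * (ω z - s * (q ⬝ᵥ z)) with hodd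
  have ee := dot_self_nonneg e
  have dσ : ∀ z : Vec d, ‖σ *ᵥ z‖ ≤ Q * Q * ‖z‖ := fun z => by
    refine (norm_mulVec_le _ _).trans ?_
    gcongr
    exact H.dQ
  have en : ‖e‖ ≤ 1 + e ⬝ᵥ e := by
    have := norm_le_e2 e
    have h2 := e2_sq e
    nlinarith [sq_nonneg (e2 e - 1)]
  have ωb : ∀ z, |ω z| ≤ 12 * Q ^ 3 * (1 + ‖z‖) ^ 2 := by
    intro z
    have h1 := H.abs_wt_le z
    have h2 : |8 * Q * h| ≤ 8 * Q ^ 3 * (1 + ‖z‖) ^ 2 := by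
      rw [abs_of_nonneg (by positivity)]
      have : Q * h ≤ Q * Q := by gcongr; exact H.hle
      have h3 : Q * Q ≤ Q ^ 3 := by nlinarith [mul_nonneg Q0 Q0]
      have h4 : 1 ≤ (1 + ‖z‖) ^ 2 := one_le_pow₀ (by linarith [norm_nonneg z])
      have h5 : 0 ≤ Q ^ 3 := by positivity
      nlinarith
    calc |ω z| ≤ |wt h r q B z| + |8 * Q * h| := abs_add_le _ _
      _ ≤ _ := by linarith
  have ω0 : ∀ z, 0 ≤ ω z := by
    intro z
    have h1 := H.low_half z
    have h2 := psd_dot_nonneg H.psd z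
    have : 0 ≤ Q * h := by positivity
    simp only [hω]; linarith
  -- pointwise bound: weighted constant term, odd term, remainder of order `h`
  have pt : ∀ z, ω z * ((e + h • m + s • (σ *ᵥ z)) ⬝ᵥ (e + h • m + s • (σ *ᵥ z)))
      ≤ (e ⬝ᵥ e) * ω z + odd z + 38 * Q ^ 8 * h * (1 + e ⬝ᵥ e) * (1 + ‖z‖) ^ 4 := by
    intro z
    set P := 1 + ‖z‖ with hP
    have z0 := norm_nonneg z
    have P1 : 1 ≤ P := by linarith
    set E := 1 + e ⬝ᵥ e with hE
    have E1 : 1 ≤ E := by linarith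
    have ex : (e + h • m + s • (σ *ᵥ z)) ⬝ᵥ (e + h • m + s • (σ *ᵥ z))
        = e ⬝ᵥ e + 2 * h * (e ⬝ᵥ m) + 2 * s * (e ⬝ᵥ σ *ᵥ z)
          + (h • m + s • (σ *ᵥ z)) ⬝ᵥ (h • m + s • (σ *ᵥ z)) := by
      simp only [add_dotProduct, dotProduct_add, smul_dotProduct, dotProduct_smul, smul_eq_mul]
      rw [dotProduct_comm m e, dotProduct_comm (σ *ᵥ z) e]
      ring
    have t1 : |e ⬝ᵥ m| ≤ Q * Q * E := by
      refine (abs_dot_le _ _).trans ?_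
      calc d * ‖e‖ * ‖m‖ ≤ Q * E * Q := by
            gcongr
            exact H.dQ
        _ = _ := by ring
    have t2 : |e ⬝ᵥ σ *ᵥ z| ≤ Q ^ 3 * E * P := by
      refine (abs_dot_le _ _).trans ?_
      calc d * ‖e‖ * ‖σ *ᵥ z‖ ≤ Q * E * (Q * Q * P) := by
            gcongr
            · exact H.dQ
            · refine (dσ z).trans ?_
              gcongr; linarith
        _ = _ := by ring
    have t3 : |q ⬝ᵥ z| ≤ Q * Q * P := by
      refine (abs_dot_le _ _).trans ?_
      gcongr
      · exact H.dQ
      · exact H.hq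
      · linarith
    have t4 : (h • m + s • (σ *ᵥ z)) ⬝ᵥ (h • m + s • (σ *ᵥ z)) ≤ Q ^ 5 * h * P ^ 2 := by
      refine (dot_self_le _).trans ?_
      have : ‖h • m + s • (σ *ᵥ z)‖ ≤ s * (Q * Q * P) := by
        refine (norm_add_le _ _).trans ?_
        rw [norm_smul, norm_smul, Real.norm_of_nonneg s0, Real.norm_of_nonneg hh.le]
        have h1 : h * ‖m‖ ≤ s * (Q * Q) := by
          rw [← ss, mul_assoc]; gcongr
        have h2 : s * ‖σ *ᵥ z‖ ≤ s * (Q * Q * ‖z‖) := by gcongr; exact dσ z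
        rw [hP]; linarith
      calc d * ‖h • m + s • (σ *ᵥ z)‖ ^ 2 ≤ Q * (s * (Q * Q * P)) ^ 2 := by
            gcongr; exact H.dQ
        _ = Q ^ 5 * (s * s) * P ^ 2 := by ring
        _ = _ := by rw [ss]
    have ωb' := ωb z
    rw [← hP] at ωb'
    have r1 : ω z * (2 * h * (e ⬝ᵥ m)) ≤ 24 * (Q ^ 8 * h * E * P ^ 4) := by
      calc ω z * (2 * h * (e ⬝ᵥ m)) ≤ |ω z * (2 * h * (e ⬝ᵥ m))| := le_abs_self _
        _ = |ω z| * (2 * h * |e ⬝ᵥ m|) := by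
          rw [abs_mul, abs_mul, abs_of_nonneg (show 0 ≤ 2 * h by positivity)]
        _ ≤ (12 * Q ^ 3 * P ^ 2) * (2 * h * (Q * Q * E)) := by gcongr
        _ = 24 * (Q ^ 5 * h * E * P ^ 2) := by ring
        _ ≤ 24 * (Q ^ 8 * h * E * P ^ 4) := by
          gcongr <;> first | assumption | norm_num
    have r2 : 2 * s * (e ⬝ᵥ σ *ᵥ z) * (s * (q ⬝ᵥ z)) ≤ 2 * (Q ^ 8 * h * E * P ^ 4) := by
      calc 2 * s * (e ⬝ᵥ σ *ᵥ z) * (s * (q ⬝ᵥ z))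
          = 2 * (s * s) * ((e ⬝ᵥ σ *ᵥ z) * (q ⬝ᵥ z)) := by ring
        _ ≤ 2 * (s * s) * |(e ⬝ᵥ σ *ᵥ z) * (q ⬝ᵥ z)| := by gcongr; exact le_abs_self _
        _ = 2 * h * (|e ⬝ᵥ σ *ᵥ z| * |q ⬝ᵥ z|) := by rw [abs_mul, ss]
        _ ≤ 2 * h * ((Q ^ 3 * E * P) * (Q * Q * P)) := by gcongr
        _ = 2 * (Q ^ 5 * h * E * P ^ 2) := by ring
        _ ≤ 2 * (Q ^ 8 * h * E * P ^ 4) := by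
          gcongr <;> first | assumption | norm_num
    have r3 : ω z * ((h • m + s • (σ *ᵥ z)) ⬝ᵥ (h • m + s • (σ *ᵥ z)))
        ≤ 12 * (Q ^ 8 * h * E * P ^ 4) := by
      calc _ ≤ (12 * Q ^ 3 * P ^ 2) * (Q ^ 5 * h * P ^ 2) := by
            refine mul_le_mul ((le_abs_self _).trans ωb') t4 (dot_self_nonneg _) (by positivity)
        _ = 12 * (Q ^ 8 * h * 1 * P ^ 4) := by ring
        _ ≤ _ := by gcongr
    rw [ex]
    simp only [hodd]
    nlinarith
  have cω : Continuous ω := (continuous_wt _ _ _ _).add continuous_const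
  have codd : Continuous odd := by
    have : Continuous fun z : Vec d => e ⬝ᵥ σ *ᵥ z := by unfold dotProduct; fun_prop
    have h2 : Continuous fun z : Vec d => q ⬝ᵥ z := by unfold dotProduct; fun_prop
    simp only [hodd]; fun_prop
  have iω : Integrable ω (gaussVec d 1) := (integral_wt h r q B).1.add (integrable_const _)
  have iωe : ∫ z, ω z ∂gaussVec d 1 = 1 + h * r + 8 * Q * h := by
    simp only [hω]
    rw [integral_add (integral_wt h r q B).1 (integrable_const _), (integral_wt h r q B).2]
    simp
  have iodd : Integrable odd (gaussVec d 1) := by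
    refine integrable_of_poly codd (2 * s * (d * ‖e‖ * (Q * Q)) * (12 * Q ^ 3 + Q * (Q * Q))) 3 ?_
    intro z
    have z0 := norm_nonneg z
    have t2 : |e ⬝ᵥ σ *ᵥ z| ≤ d * ‖e‖ * (Q * Q) * (1 + ‖z‖) := by
      refine (abs_dot_le _ _).trans ?_
      rw [mul_assoc (d * ‖e‖)]
      gcongr
      refine (dσ z).trans ?_
      gcongr; linarith
    have t3 : |q ⬝ᵥ z| ≤ Q * Q * (1 + ‖z‖) ^ 2 := by
      refine (abs_dot_le _ _).trans ?_
      gcongr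
      · exact H.dQ
      · exact H.hq
      · nlinarith
    have t4 : |ω z - s * (q ⬝ᵥ z)| ≤ (12 * Q ^ 3 + Q * (Q * Q)) * (1 + ‖z‖) ^ 2 := by
      refine (abs_sub _ _).trans ?_
      rw [abs_mul s, abs_of_nonneg s0, add_mul]
      have := ωb z
      have h2 : s * |q ⬝ᵥ z| ≤ Q * (Q * Q * (1 + ‖z‖) ^ 2) := by gcongr
      linarith
    simp only [hodd]
    rw [abs_mul, abs_mul, abs_of_nonneg (show 0 ≤ 2 * s by positivity)]
    calc _ ≤ 2 * s * (d * ‖e‖ * (Q * Q) * (1 + ‖z‖)) *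
          ((12 * Q ^ 3 + Q * (Q * Q)) * (1 + ‖z‖) ^ 2) := by gcongr
      _ = _ := by ring
  have oodd : ∫ z, odd z ∂gaussVec d 1 = 0 := by
    refine integral_odd odd codd fun z => ?_
    have h1 := WtOK.wt_even (h := h) (r := r) (q := q) (B := B) z
    simp only [hodd, hω]
    rw [mulVec_neg, dotProduct_neg]
    have h2 : wt h r q B (-z) + 8 * Q * h - s * q ⬝ᵥ -z
      = wt h r q B z + 8 * Q * h - s * q ⬝ᵥ z := by linarith
    rw [h2]; ring
  have iP := (integrable_one_add_norm_pow d 4).const_mul (38 * Q ^ 8 * h * (1 + e ⬝ᵥ e))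
  have iall := ((iω.const_mul (e ⬝ᵥ e)).add iodd).add iP
  refine (integral_mono_of_nonneg (Filter.Eventually.of_forall fun z =>
    mul_nonneg (ω0 z) (dot_self_nonneg _)) iall (Filter.Eventually.of_forall pt)).trans ?_
  rw [integral_add' ((iω.const_mul (e ⬝ᵥ e)).add iodd) iP,
    integral_add' (iω.const_mul (e ⬝ᵥ e)) iodd, integral_const_mul, integral_const_mul, oodd, iωe]
  have := le_of_abs_le H.hr
  have h3 : 0 ≤ (e ⬝ᵥ e) * h := mul_nonneg ee hh.le
  nlinarith

end

/-! ### One-step gradient estimate -/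

lemma dot_add4_le {d : ℕ} (a b c e : Vec d) :
    (a + b + c + e) ⬝ᵥ (a + b + c + e)
      ≤ 4 * (a ⬝ᵥ a + b ⬝ᵥ b + c ⬝ᵥ c + e ⬝ᵥ e) := by
  unfold dotProduct
  rw [← Finset.sum_add_distrib, ← Finset.sum_add_distrib, ← Finset.sum_add_distrib, Finset.mul_sum]
  refine Finset.sum_le_sum fun i _ => ?_
  simp only [Pi.add_apply]
  nlinarith [sq_nonneg (a i - b i), sq_nonneg (a i - c i), sq_nonneg (a i - e i),
    sq_nonneg (b i - c i), sq_nonneg (b i - e i), sq_nonneg (c i - e i)]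

section
variable {d : ℕ} {Q h r : ℝ} {q : Vec d} {B : Mat d}

/-- The vector that, paired with the gradient of `ψ` at the Euler point, gives the derivative of the
linearised one-step operator in the direction `e`; `m`, `Sg` are the increments of drift and
diffusion and `Ξ = σ σ'⁻¹ (σ - σ')` comes from integrating the increment of the weight by parts. -/
def gradVec (h r : ℝ) (q : Vec d) (B : Mat d) (e m : Vec d) (Sg Ξ : Mat d) (z : Vec d) : Vec d :=
  wt h r q B z • (e + h • m + √h • (Sg *ᵥ z)) - h • (Ξ *ᵥ q) - (2 * √h) • (Ξ *ᵥ (B *ᵥ z))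

/-- The part of the bound on `|gradVec|` that is odd in `z` and hence integrates to zero. -/
def gradOdd (h r : ℝ) (q : Vec d) (B : Mat d) (e : Vec d) (Sg Ξ : Mat d) (z : Vec d) : ℝ :=
  √h * (e ⬝ᵥ Sg *ᵥ z) * (wt h r q B z - √h * (q ⬝ᵥ z)) - 2 * √h * (e ⬝ᵥ Ξ *ᵥ (B *ᵥ z))

set_option maxHeartbeats 1000000 in
/-- Pointwise form of the gradient estimate, from `√w ≤ (t + w / t) / 2` with
`t = |e| (wt + 4 Q h)`. The term of order `√h` in `|gradVec|²` that is not odd is absorbed through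
`|Bz|² ≤ ⟨z, Bz⟩ ≤ 2 (wt + 4 Q h)`. -/
lemma WtOK.grad_pointwise (H : WtOK Q h r q B) {e m : Vec d} {Sg Ξ : Mat d} (ha : 0 < e2 e)
    (hm : ‖m‖ ≤ Q * e2 e) (hSg : ‖Sg‖ ≤ Q * e2 e) (hΞ : ‖Ξ‖ ≤ Q * e2 e) (z : Vec d) :
    e2 (gradVec h r q B e m Sg Ξ z) ≤ e2 e * (wt h r q B z + 4 * Q * h)
      + gradOdd h r q B e Sg Ξ z / e2 e + 440 * Q ^ 8 * h * e2 e * (1 + ‖z‖) ^ 4 := by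
  have Q1 := H.Q1
  have Q0 : 0 ≤ Q := zero_le_one.trans Q1
  have hh := H.hh
  set a := e2 e with hadef
  have aa : e ⬝ᵥ e = a ^ 2 := (e2_sq e).symm
  have ea : ‖e‖ ≤ a := norm_le_e2 e
  set s := √h with hs
  have s0 : 0 ≤ s := Real.sqrt_nonneg h
  have ss : s * s = h := Real.mul_self_sqrt hh.le
  have sQ : s ≤ Q := H.sqrt_le
  set P := 1 + ‖z‖ with hP
  have z0 := norm_nonneg z
  have P1 : 1 ≤ P := by linarith
  have P0 : 0 ≤ P := by linarith
  have zP : ‖z‖ ≤ P := by linarith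
  set ρ := wt h r q B z with hρ
  set τ := ρ + 4 * Q * h with hτ
  have low := H.low_half z
  have zBz := psd_dot_nonneg H.psd z
  have τh : h ≤ τ := by linarith
  have τ0 : 0 < τ := hh.trans_le τh
  have ρb : |ρ| ≤ 4 * Q ^ 3 * P ^ 2 := H.abs_wt_le z
  have one_le_Q3 : 1 ≤ Q ^ 3 := one_le_pow₀ Q1
  have one_le_P2 : 1 ≤ P ^ 2 := one_le_pow₀ P1
  have Qh : Q * h ≤ Q ^ 3 * P ^ 2 := by
    calc Q * h ≤ Q * Q := by gcongr; exact H.hle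
      _ = Q ^ 2 * 1 := by ring
      _ ≤ Q ^ 3 * P ^ 2 := by
        gcongr <;> first | assumption | norm_num
  have τb : τ ≤ 8 * Q ^ 3 * P ^ 2 := by
    have := le_of_abs_le ρb
    linarith
  set Y : Vec d := (-(4 * Q * h)) • e + ρ • (h • m + s • (Sg *ᵥ z)) + (-h) • (Ξ *ᵥ q)
    + (-(2 * s)) • (Ξ *ᵥ (B *ᵥ z)) with hY
  have hV : gradVec h r q B e m Sg Ξ z = τ • e + Y := by
    unfold gradVec
    rw [← hρ, ← hs, hY, hτ]
    module
  have hVV : (τ • e + Y) ⬝ᵥ (τ • e + Y) = τ ^ 2 * a ^ 2 + 2 * τ * (e ⬝ᵥ Y) + Y ⬝ᵥ Y := by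
    simp only [add_dotProduct, dotProduct_add, smul_dotProduct, dotProduct_smul, smul_eq_mul]
    rw [dotProduct_comm Y e, aa]
    ring
  -- bounds on the ingredients
  have dSg : ‖Sg *ᵥ z‖ ≤ Q * (Q * a) * P := by
    refine (norm_mulVec_le _ _).trans ?_
    gcongr
    exact H.dQ
  have dΞ : ∀ v : Vec d, ‖Ξ *ᵥ v‖ ≤ Q * (Q * a) * ‖v‖ := fun v => by
    refine (norm_mulVec_le _ _).trans ?_
    gcongr
    exact H.dQ
  have sq1 : (h • m + s • (Sg *ᵥ z)) ⬝ᵥ (h • m + s • (Sg *ᵥ z)) ≤ Q ^ 5 * h * a ^ 2 * (4 * P ^ 2) := by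
    refine (dot_self_le _).trans ?_
    have : ‖h • m + s • (Sg *ᵥ z)‖ ≤ s * (Q * Q * a * (2 * P)) := by
      refine (norm_add_le _ _).trans ?_
      rw [norm_smul, norm_smul, Real.norm_of_nonneg s0, Real.norm_of_nonneg hh.le]
      have h1 : h * ‖m‖ ≤ s * (Q * (Q * a * P)) := by
        rw [← ss, mul_assoc]
        gcongr
        calc ‖m‖ ≤ Q * a * 1 := by linarith
          _ ≤ Q * a * P := by gcongr
      have h2 : s * ‖Sg *ᵥ z‖ ≤ s * (Q * (Q * a) * P) := by gcongr
      linarith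
    calc d * ‖h • m + s • (Sg *ᵥ z)‖ ^ 2 ≤ Q * (s * (Q * Q * a * (2 * P))) ^ 2 := by
          gcongr; exact H.dQ
      _ = Q ^ 5 * (s * s) * a ^ 2 * (4 * P ^ 2) := by ring
      _ = _ := by rw [ss]
  have sq2 : (Ξ *ᵥ q) ⬝ᵥ (Ξ *ᵥ q) ≤ Q ^ 7 * a ^ 2 := by
    refine (dot_self_le _).trans ?_
    calc d * ‖Ξ *ᵥ q‖ ^ 2 ≤ Q * (Q * (Q * a) * Q) ^ 2 := by
          gcongr
          · exact H.dQ
          · refine (dΞ q).trans ?_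
            gcongr
            exact H.hq
      _ = _ := by ring
  have sq3 : (Ξ *ᵥ (B *ᵥ z)) ⬝ᵥ (Ξ *ᵥ (B *ᵥ z)) ≤ Q ^ 5 * a ^ 2 * (2 * τ) := by
    refine (dot_self_le _).trans ?_
    have h1 : ‖B *ᵥ z‖ ^ 2 ≤ 2 * τ := by
      calc ‖B *ᵥ z‖ ^ 2 ≤ e2 (B *ᵥ z) ^ 2 := by gcongr; exact norm_le_e2 _
        _ = (B *ᵥ z) ⬝ᵥ (B *ᵥ z) := e2_sq _
        _ ≤ B.trace * (z ⬝ᵥ B *ᵥ z) := psd_mulVec_sq_le H.psd z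
        _ ≤ 1 * (z ⬝ᵥ B *ᵥ z) := by gcongr; exact H.tr
        _ ≤ 2 * τ := by linarith
    calc d * ‖Ξ *ᵥ (B *ᵥ z)‖ ^ 2 ≤ Q * (Q * (Q * a) * ‖B *ᵥ z‖) ^ 2 := by
          gcongr
          · exact H.dQ
          · exact dΞ _
      _ = Q ^ 5 * a ^ 2 * ‖B *ᵥ z‖ ^ 2 := by ring
      _ ≤ _ := by gcongr
  set M := Q ^ 8 * P ^ 4 * h * a ^ 2 with hM
  have p1 : (-(4 * Q * h)) ^ 2 * (e ⬝ᵥ e) ≤ 16 * M * τ := by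
    rw [aa]
    calc (-(4 * Q * h)) ^ 2 * a ^ 2 = 16 * (Q ^ 2 * 1 * h * a ^ 2) * h := by ring
      _ ≤ 16 * (Q ^ 8 * P ^ 4 * h * a ^ 2) * τ := by
        gcongr <;> first | assumption | exact one_le_pow₀ P1 | norm_num
  have ρsq : ρ ^ 2 ≤ 48 * (Q ^ 3 * P ^ 2) * τ := by
    have h1 : ρ ^ 2 ≤ 2 * τ ^ 2 + 32 * (Q * h) ^ 2 := by
      nlinarith [sq_nonneg (τ + 4 * Q * h)]
    have h2 : τ ^ 2 ≤ 8 * Q ^ 3 * P ^ 2 * τ := by rw [sq]; gcongr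
    have h3 : (Q * h) ^ 2 ≤ (Q ^ 3 * P ^ 2) * τ := by
      calc (Q * h) ^ 2 = (Q ^ 2 * h) * h := by ring
        _ ≤ (Q ^ 3 * P ^ 2) * τ := by
          refine mul_le_mul ?_ τh hh.le (by positivity)
          calc Q ^ 2 * h ≤ Q ^ 2 * Q := by gcongr; exact H.hle
            _ = Q ^ 3 * 1 := by ring
            _ ≤ _ := by gcongr
    linarith
  have p2 : ρ ^ 2 * ((h • m + s • (Sg *ᵥ z)) ⬝ᵥ (h • m + s • (Sg *ᵥ z))) ≤ 192 * M * τ := by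
    calc _ ≤ (48 * (Q ^ 3 * P ^ 2) * τ) * (Q ^ 5 * h * a ^ 2 * (4 * P ^ 2)) :=
          mul_le_mul ρsq sq1 (dot_self_nonneg _) (by positivity)
      _ = _ := by rw [hM]; ring
  have p3 : (-h) ^ 2 * ((Ξ *ᵥ q) ⬝ᵥ (Ξ *ᵥ q)) ≤ 1 * M * τ := by
    calc _ ≤ (-h) ^ 2 * (Q ^ 7 * a ^ 2) := by gcongr
      _ = 1 * (Q ^ 7 * 1 * h * a ^ 2) * h := by ring
      _ ≤ 1 * (Q ^ 8 * P ^ 4 * h * a ^ 2) * τ := by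
        gcongr <;> first | assumption | exact one_le_pow₀ P1 | norm_num
  have p4 : (-(2 * s)) ^ 2 * ((Ξ *ᵥ (B *ᵥ z)) ⬝ᵥ (Ξ *ᵥ (B *ᵥ z))) ≤ 8 * M * τ := by
    calc _ ≤ (-(2 * s)) ^ 2 * (Q ^ 5 * a ^ 2 * (2 * τ)) := by gcongr
      _ = 8 * (Q ^ 5 * 1 * (s * s) * a ^ 2) * τ := by ring
      _ = 8 * (Q ^ 5 * 1 * h * a ^ 2) * τ := by rw [ss]
      _ ≤ 8 * (Q ^ 8 * P ^ 4 * h * a ^ 2) * τ := by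
        gcongr <;> first | assumption | exact one_le_pow₀ P1 | norm_num
  have YY : Y ⬝ᵥ Y ≤ 868 * M * τ := by
    have sm : ∀ (c : ℝ) (v : Vec d), (c • v) ⬝ᵥ (c • v) = c ^ 2 * (v ⬝ᵥ v) := fun c v => by
      rw [smul_dotProduct, dotProduct_smul, smul_eq_mul, smul_eq_mul]; ring
    have := dot_add4_le ((-(4 * Q * h)) • e) (ρ • (h • m + s • (Sg *ᵥ z))) ((-h) • (Ξ *ᵥ q))
      ((-(2 * s)) • (Ξ *ᵥ (B *ᵥ z)))
    rw [← hY, sm, sm, sm, sm] at this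
    linarith
  -- the linear term
  have eY : e ⬝ᵥ Y = gradOdd h r q B e Sg Ξ z + (-(4 * Q * h * a ^ 2) + h * (ρ * (e ⬝ᵥ m))
      + h * ((e ⬝ᵥ Sg *ᵥ z) * (q ⬝ᵥ z)) - h * (e ⬝ᵥ Ξ *ᵥ q)) := by
    rw [hY]
    unfold gradOdd
    rw [← hs, ← hρ, ← aa]
    simp only [dotProduct_add, dotProduct_smul, smul_eq_mul]
    have : h * ((e ⬝ᵥ Sg *ᵥ z) * (q ⬝ᵥ z)) = s * s * ((e ⬝ᵥ Sg *ᵥ z) * (q ⬝ᵥ z)) := by rw [ss]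
    rw [this]; ring
  have l1 : ρ * (e ⬝ᵥ m) ≤ 4 * (Q ^ 8 * P ^ 4 * a ^ 2) := by
    calc ρ * (e ⬝ᵥ m) ≤ |ρ| * |e ⬝ᵥ m| := by rw [← abs_mul]; exact le_abs_self _
      _ ≤ (4 * Q ^ 3 * P ^ 2) * (Q * a * (Q * a)) := by
        gcongr
        refine (abs_dot_le _ _).trans ?_
        gcongr
        exact H.dQ
      _ = 4 * (Q ^ 5 * P ^ 2 * a ^ 2) := by ring
      _ ≤ _ := by gcongr <;> first | assumption | norm_num
  have l2 : (e ⬝ᵥ Sg *ᵥ z) * (q ⬝ᵥ z) ≤ Q ^ 8 * P ^ 4 * a ^ 2 := by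
    calc _ ≤ |e ⬝ᵥ Sg *ᵥ z| * |q ⬝ᵥ z| := by rw [← abs_mul]; exact le_abs_self _
      _ ≤ (Q * a * (Q * (Q * a) * P)) * (Q * Q * P) := by
        gcongr
        · refine (abs_dot_le _ _).trans ?_
          gcongr
          exact H.dQ
        · refine (abs_dot_le _ _).trans ?_
          gcongr
          · exact H.dQ
          · exact H.hq
      _ = Q ^ 5 * P ^ 2 * a ^ 2 := by ring
      _ ≤ _ := by gcongr <;> first | assumption | norm_num
  have l3 : -(e ⬝ᵥ Ξ *ᵥ q) ≤ Q ^ 8 * P ^ 4 * a ^ 2 := by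
    calc _ ≤ |e ⬝ᵥ Ξ *ᵥ q| := neg_le_abs _
      _ ≤ Q * a * (Q * (Q * a) * Q) := by
        refine (abs_dot_le _ _).trans ?_
        gcongr
        · exact H.dQ
        · refine (dΞ q).trans ?_
          gcongr
          exact H.hq
      _ = Q ^ 4 * 1 * a ^ 2 := by ring
      _ ≤ _ := by
        gcongr <;> first | assumption | exact one_le_pow₀ P1 | norm_num
  have eY' : e ⬝ᵥ Y ≤ gradOdd h r q B e Sg Ξ z + 6 * M := by
    rw [eY]
    have h1 : 0 ≤ 4 * Q * h * a ^ 2 := by positivity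
    have h2 := mul_le_mul_of_nonneg_left l1 hh.le
    have h3 := mul_le_mul_of_nonneg_left l2 hh.le
    have h4 := mul_le_mul_of_nonneg_left l3 hh.le
    rw [hM]; linarith
  -- assemble
  have key : 2 * (τ * a) * e2 (τ • e + Y) ≤ (τ * a) ^ 2 + (τ • e + Y) ⬝ᵥ (τ • e + Y) := by
    have := e2_sq (τ • e + Y)
    nlinarith [sq_nonneg (e2 (τ • e + Y) - τ * a)]
  rw [hVV] at key
  rw [hV]
  have fin : 2 * (τ * a) * e2 (τ • e + Y) ≤ 2 * (τ * a) *
      (a * τ + gradOdd h r q B e Sg Ξ z / a + 440 * Q ^ 8 * h * a * P ^ 4) := by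
    refine key.trans ?_
    have h1 : 2 * (τ * a) * (a * τ + gradOdd h r q B e Sg Ξ z / a + 440 * Q ^ 8 * h * a * P ^ 4)
      = 2 * τ ^ 2 * a ^ 2 + 2 * τ * gradOdd h r q B e Sg Ξ z + 880 * M * τ := by
      rw [hM]; field_simp; ring
    rw [h1]
    have h2 := mul_le_mul_of_nonneg_left eY' (show 0 ≤ 2 * τ by positivity)
    linarith
  exact le_of_mul_le_mul_left fin (by positivity)

/-- Integrated gradient estimate, stated through an integrable majorant. -/
lemma WtOK.grad_bound (H : WtOK Q h r q B) {e m : Vec d} {Sg Ξ : Mat d} (ha : 0 < e2 e)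
    (hm : ‖m‖ ≤ Q * e2 e) (hSg : ‖Sg‖ ≤ Q * e2 e) (hΞ : ‖Ξ‖ ≤ Q * e2 e) :
    ∃ U : Vec d → ℝ, Integrable U (gaussVec d 1) ∧
      (∀ z, e2 (gradVec h r q B e m Sg Ξ z) ≤ U z) ∧
      ∫ z, U z ∂gaussVec d 1
        ≤ e2 e * (1 + (5 * Q + 440 * Q ^ 8 * ∫ z, (1 + ‖z‖) ^ 4 ∂gaussVec d 1) * h) := by
  have cdot : ∀ (u : Vec d) (N : Mat d), Continuous fun z : Vec d => u ⬝ᵥ N *ᵥ z := fun u N => by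
    unfold dotProduct; fun_prop
  have cq : Continuous fun z : Vec d => q ⬝ᵥ z := by unfold dotProduct; fun_prop
  have cw := continuous_wt h r q B
  have codd : Continuous (gradOdd h r q B e Sg Ξ) := by
    unfold gradOdd
    have h1 := cdot e Sg
    have h2 := cdot e (Ξ * B)
    simp_rw [mulVec_mulVec]
    fun_prop
  have oodd : ∫ z, gradOdd h r q B e Sg Ξ z ∂gaussVec d 1 = 0 := by
    refine integral_odd _ codd fun z => ?_
    unfold gradOdd
    rw [WtOK.wt_even]
    simp only [mulVec_neg, dotProduct_neg]
    ring
  have iodd : Integrable (gradOdd h r q B e Sg Ξ) (gaussVec d 1) := by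
    have Q0 : 0 ≤ Q := zero_le_one.trans H.Q1
    refine integrable_of_poly codd (√h * (d * ‖e‖ * (d * ‖Sg‖)) * (4 * Q ^ 3 + √h * (d * ‖q‖))
      + 2 * √h * (d * ‖e‖ * (d * ‖Ξ * B‖))) 3 fun z => ?_
    have z0 := norm_nonneg z
    have lin : ∀ N : Mat d, |e ⬝ᵥ N *ᵥ z| ≤ d * ‖e‖ * (d * ‖N‖) * (1 + ‖z‖) := fun N => by
      refine (abs_dot_le _ _).trans ?_
      rw [mul_assoc (d * ‖e‖)]
      gcongr
      refine (norm_mulVec_le _ _).trans ?_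
      gcongr; linarith
    have b1 : |wt h r q B z - √h * (q ⬝ᵥ z)| ≤ (4 * Q ^ 3 + √h * (d * ‖q‖)) * (1 + ‖z‖) ^ 2 := by
      refine (abs_sub _ _).trans ?_
      rw [abs_mul, abs_of_nonneg (Real.sqrt_nonneg h), add_mul]
      gcongr ?_ + ?_
      · exact H.abs_wt_le z
      · rw [mul_assoc]
        refine mul_le_mul_of_nonneg_left ?_ (Real.sqrt_nonneg h)
        refine (abs_dot_le _ _).trans ?_
        gcongr
        nlinarith
    unfold gradOdd
    refine (abs_sub _ _).trans ?_
    rw [mulVec_mulVec, abs_mul, abs_mul, abs_mul (2 * √h), abs_of_nonneg (Real.sqrt_nonneg h),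
      abs_of_nonneg (show 0 ≤ 2 * √h by positivity), add_mul]
    gcongr ?_ + ?_
    · calc _ ≤ √h * (d * ‖e‖ * (d * ‖Sg‖) * (1 + ‖z‖)) *
            ((4 * Q ^ 3 + √h * (d * ‖q‖)) * (1 + ‖z‖) ^ 2) := by
            gcongr
            exact lin Sg
        _ = _ := by ring
    · rw [mul_assoc (2 * √h)]
      gcongr
      refine (lin _).trans ?_
      gcongr
      exact le_self_pow₀ (by linarith) (by norm_num)
  have iw : Integrable (fun z => e2 e * (wt h r q B z + 4 * Q * h)) (gaussVec d 1) :=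
    ((integral_wt h r q B).1.add (integrable_const _)).const_mul _
  have iP := (integrable_one_add_norm_pow d 4).const_mul (440 * Q ^ 8 * h * e2 e)
  have iodd' : Integrable (fun z => gradOdd h r q B e Sg Ξ z / e2 e) (gaussVec d 1) :=
    iodd.div_const _
  refine ⟨_, (iw.add iodd').add iP, H.grad_pointwise ha hm hSg hΞ, ?_⟩
  rw [integral_add' (iw.add iodd') iP, integral_add' iw iodd', integral_const_mul,
    integral_const_mul, integral_div, oodd,
    integral_add (integral_wt h r q B).1 (integrable_const _), (integral_wt h r q B).2]
  have := le_of_abs_le H.hr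
  have h3 : 0 ≤ e2 e * h := mul_nonneg ha.le H.hh.le
  simp only [integral_const, probReal_univ, one_smul, zero_div, add_zero]
  nlinarith

end

/-! ### Linearisation of the one-step operator -/

/-- Uniform constants for the coefficients. The field `lin` is the mean value theorem for `F`: the
increment of `F` is controlled by a linear form `(r, p, Γ)` which, transported by `σ⁻¹`, satisfies
the sign, trace and size conditions of `WtOK`. -/
structure Coeff {d : ℕ} (Q : ℝ) (F : ℝ → Vec d → ℝ → Vec d → Mat d → ℝ)
    (μ : ℝ → Vec d → Vec d) (σ : ℝ → Vec d → Mat d) : Prop where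
  Q1 : 1 ≤ Q
  dQ : (d : ℝ) ≤ Q
  hμ : ∀ t x, ‖μ t x‖ ≤ Q
  hσ : ∀ t x, ‖σ t x‖ ≤ Q
  hS : ∀ t x, ‖(σ t x)⁻¹‖ ≤ Q
  inv : ∀ t x, IsUnit (σ t x).det
  lμ : ∀ t x y, ‖μ t x - μ t y‖ ≤ Q * ‖x - y‖
  lσ : ∀ t x y, ‖σ t x - σ t y‖ ≤ Q * ‖x - y‖
  F0 : ∀ t x c, |F t x c 0 0| ≤ Q + Q * |c|
  lin : ∀ t x x' a a' b b' c c', ∃ (r : ℝ) (p : Vec d) (Γ : Mat d),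
    F t x a b c - F t x' a' b' c' ≤ Q * ‖x - x'‖ + (r * (a - a') + p ⬝ᵥ (b - b')
      + ∑ i, ∑ j, Γ i j * (c i j - c' i j)) ∧ ‖p‖ ≤ Q ∧ ‖Γ‖ ≤ Q ∧
    ∀ h, 0 < h → h ≤ Q → WtOK Q h r ((σ t x)⁻¹ *ᵥ p) ((σ t x)⁻¹ * Γ * (σ t x)⁻¹ᵀ)

/-- The Euler point in terms of a standard Gaussian vector. -/
def epos {d : ℕ} (μ : ℝ → Vec d → Vec d) (σ : ℝ → Vec d → Mat d) (h t : ℝ) (x z : Vec d) : Vec d :=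
  x + h • μ t x + √h • (σ t x *ᵥ z)

lemma continuous_epos {d : ℕ} (μ : ℝ → Vec d → Vec d) (σ : ℝ → Vec d → Mat d) (h t : ℝ)
    (x : Vec d) : Continuous (epos μ σ h t x) := by
  unfold epos; fun_prop

/-- The linear one-step functional with coefficients `(r, p, Γ)`. -/
def linStep {d : ℕ} (μ : ℝ → Vec d → Vec d) (σ : ℝ → Vec d → Mat d) (h t r : ℝ) (p : Vec d)
    (Γ : Mat d) (ψ : Vec d → ℝ) (x : Vec d) : ℝ :=
  ∫ z, ψ (epos μ σ h t x z) *
    wt h r ((σ t x)⁻¹ *ᵥ p) ((σ t x)⁻¹ * Γ * (σ t x)⁻¹ᵀ) z ∂gaussVec d 1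

lemma trace_mul_vecMulVec_self {d : ℕ} (B : Mat d) (z : Vec d) :
    (B * vecMulVec z z).trace = z ⬝ᵥ B *ᵥ z := by
  rw [mul_vecMulVec, trace_vecMulVec, dotProduct_comm]

lemma norm_vecMulVec_le {d : ℕ} (z : Vec d) : ‖vecMulVec z z‖ ≤ ‖z‖ ^ 2 := by
  refine (Matrix.norm_le_iff (by positivity)).2 fun i j => ?_
  rw [vecMulVec_apply, norm_mul, sq]
  gcongr <;> exact norm_le_pi_norm z _

/-- The expectations entering the scheme, combined with coefficients `(r, p, Γ)`, form a single
weighted expectation. -/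
lemma linStep_eq {d : ℕ} (μ : ℝ → Vec d → Vec d) (σ : ℝ → Vec d → Mat d) {h t : ℝ} (hh : 0 < h)
    (r : ℝ) (p : Vec d) (Γ : Mat d) {ψ : Vec d → ℝ} (hψ : Continuous ψ) {M : ℝ}
    (hM : ∀ x, |ψ x| ≤ M) (x : Vec d) :
    (∫ w, ψ (euler μ σ h t x w) ∂gaussVec d h)
      + h * (r * (∫ w, ψ (euler μ σ h t x w) ∂gaussVec d h)
        + p ⬝ᵥ (fun i => ∫ w, ψ (euler μ σ h t x w) * H1w σ h t x w i ∂gaussVec d h)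
        + ∑ i, ∑ j, Γ i j * ∫ w, ψ (euler μ σ h t x w) * H2w σ h t x w i j ∂gaussVec d h)
      = linStep μ σ h t r p Γ ψ x := by
  have M0 : 0 ≤ M := (abs_nonneg _).trans (hM 0)
  have ce : Continuous (euler μ σ h t x) := by unfold euler; fun_prop
  have c1 : ∀ i, Continuous fun w => H1w σ h t x w i := fun i => by
    unfold H1w; fun_prop
  have c2 : ∀ i j, Continuous fun w => H2w σ h t x w i j := fun i j => by
    have : Continuous fun w : Vec d => H2w σ h t x w := by
      unfold H2w
      have hv : Continuous fun w : Vec d => vecMulVec w w := continuous_id.matrix_vecMulVec continuous_id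
      fun_prop
    exact this.matrix_elem i j
  have ee : ∀ z, euler μ σ h t x (√h • z) = epos μ σ h t x z := fun z => by
    unfold euler epos; rw [mulVec_smul]
  have cX := continuous_epos μ σ h t x
  have cψ : Continuous fun z => ψ (epos μ σ h t x z) := hψ.comp cX
  have sq0 : √h ≤ 1 + √h := by linarith
  have nz : ∀ z : Vec d, ‖√h • z‖ = √h * ‖z‖ := fun z => by
    rw [norm_smul, Real.norm_of_nonneg (Real.sqrt_nonneg h)]
  have i0 : Integrable (fun z => ψ (epos μ σ h t x z)) (gaussVec d 1) :=
    integrable_of_poly cψ M 0 fun z => by simpa using hM _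
  have i1 : ∀ i, Integrable (fun z => ψ (epos μ σ h t x z) * H1w σ h t x (√h • z) i)
      (gaussVec d 1) := fun i => by
    refine integrable_of_poly (cψ.mul ((c1 i).comp (continuous_const_smul _)))
      (M * (|1 / h| * (d * ‖(σ t x)ᵀ⁻¹‖ * √h))) 1 fun z => ?_
    rw [abs_mul, mul_assoc]
    gcongr
    · exact hM _
    · refine (norm_le_pi_norm (H1w σ h t x (√h • z)) i).trans ?_
      unfold H1w
      rw [norm_smul, Real.norm_eq_abs, mul_assoc]
      gcongr
      refine (norm_mulVec_le _ _).trans ?_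
      rw [nz, pow_one, mul_assoc _ (√h)]
      gcongr
      linarith [norm_nonneg z]
  have i2 : ∀ i j, Integrable (fun z => ψ (epos μ σ h t x z) * H2w σ h t x (√h • z) i j)
      (gaussVec d 1) := fun i j => by
    refine integrable_of_poly (cψ.mul ((c2 i j).comp (continuous_const_smul _)))
      (M * (|1 / h ^ 2| * (d * (d * ‖(σ t x)ᵀ⁻¹‖ * (h + ‖h • (1 : Mat d)‖)) * ‖(σ t x)⁻¹‖)))
      2 fun z => ?_
    rw [abs_mul, mul_assoc]
    gcongr
    · exact hM _
    · refine (Matrix.norm_entry_le_entrywise_sup_norm (H2w σ h t x (√h • z))).trans ?_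
      unfold H2w
      have z0 := norm_nonneg z
      have hN : ‖vecMulVec (√h • z) (√h • z) - h • (1 : Mat d)‖
          ≤ (h + ‖h • (1 : Mat d)‖) * (1 + ‖z‖) ^ 2 := by
        refine (norm_sub_le _ _).trans ?_
        rw [add_mul]
        gcongr ?_ + ?_
        · refine (norm_vecMulVec_le _).trans ?_
          rw [nz, mul_pow, Real.sq_sqrt hh.le]
          gcongr
          linarith
        · exact le_mul_of_one_le_right (norm_nonneg _) (one_le_pow₀ (by linarith))
      rw [norm_smul, Real.norm_eq_abs]
      calc |1 / h ^ 2| * ‖(σ t x)ᵀ⁻¹ * (vecMulVec (√h • z) (√h • z) - h • (1 : Mat d))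
            * (σ t x)⁻¹‖
          ≤ |1 / h ^ 2| * (d * (d * ‖(σ t x)ᵀ⁻¹‖ * ((h + ‖h • (1 : Mat d)‖) * (1 + ‖z‖) ^ 2))
            * ‖(σ t x)⁻¹‖) := by
            refine mul_le_mul_of_nonneg_left ?_ (abs_nonneg _)
            refine (norm_matmul_le _ _).trans ?_
            gcongr
            refine (norm_matmul_le _ _).trans ?_
            gcongr
        _ = _ := by ring
  have g0 : ∫ w, ψ (euler μ σ h t x w) ∂gaussVec d h
      = ∫ z, ψ (epos μ σ h t x z) ∂gaussVec d 1 := by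
    rw [integral_gaussVec d hh.le (fun w => ψ (euler μ σ h t x w)) (hψ.comp ce)]
    simp only [ee]
  have g1 : ∀ i, ∫ w, ψ (euler μ σ h t x w) * H1w σ h t x w i ∂gaussVec d h
      = ∫ z, ψ (epos μ σ h t x z) * H1w σ h t x (√h • z) i ∂gaussVec d 1 := fun i => by
    rw [integral_gaussVec d hh.le (fun w => ψ (euler μ σ h t x w) * H1w σ h t x w i)
      ((hψ.comp ce).mul (c1 i))]
    simp only [ee]
  have g2 : ∀ i j, ∫ w, ψ (euler μ σ h t x w) * H2w σ h t x w i j ∂gaussVec d h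
      = ∫ z, ψ (epos μ σ h t x z) * H2w σ h t x (√h • z) i j ∂gaussVec d 1 := fun i j => by
    rw [integral_gaussVec d hh.le (fun w => ψ (euler μ σ h t x w) * H2w σ h t x w i j)
      ((hψ.comp ce).mul (c2 i j))]
    simp only [ee]
  simp only [g0, g1, g2, dotProduct]
  simp_rw [← integral_const_mul]
  rw [← integral_finsetSum _ fun i _ => (i1 i).const_mul _]
  have : ∀ i ∈ Finset.univ, ∑ j, ∫ z, Γ i j * (ψ (epos μ σ h t x z) * H2w σ h t x (√h • z) i j)
      ∂gaussVec d 1 = ∫ z, ∑ j, Γ i j * (ψ (epos μ σ h t x z) * H2w σ h t x (√h • z) i j)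
      ∂gaussVec d 1 := fun i _ => by
    rw [integral_finsetSum _ fun j _ => (i2 i j).const_mul _]
  have J1 : Integrable (fun z => ∑ i, p i * (ψ (epos μ σ h t x z) * H1w σ h t x (√h • z) i))
      (gaussVec d 1) := integrable_finsetSum _ fun i _ => (i1 i).const_mul _
  have J2 : ∀ i, Integrable (fun z => ∑ j, Γ i j * (ψ (epos μ σ h t x z) *
      H2w σ h t x (√h • z) i j)) (gaussVec d 1) := fun i =>
    integrable_finsetSum _ fun j _ => (i2 i j).const_mul _
  have J3 : Integrable (fun z => ∑ i, ∑ j, Γ i j * (ψ (epos μ σ h t x z) *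
      H2w σ h t x (√h • z) i j)) (gaussVec d 1) := integrable_finsetSum _ fun i _ => J2 i
  rw [Finset.sum_congr rfl this, ← integral_finsetSum _ fun i _ => J2 i,
    ← integral_add' (i0.const_mul _) J1, ← integral_add' ((i0.const_mul _).add J1) J3,
    ← integral_const_mul, ← integral_add' i0 ((((i0.const_mul _).add J1).add J3).const_mul h)]
  unfold linStep
  congr 1
  ext z
  simp only [Pi.add_apply]
  have k1 : ∑ i, p i * (ψ (epos μ σ h t x z) * H1w σ h t x (√h • z) i)
      = ψ (epos μ σ h t x z) * (1 / h * (√h * (((σ t x)⁻¹ *ᵥ p) ⬝ᵥ z))) := by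
    have : ((σ t x)⁻¹ *ᵥ p) ⬝ᵥ z = p ⬝ᵥ (σ t x)ᵀ⁻¹ *ᵥ z := by
      rw [← transpose_nonsing_inv, mulVec_transpose, ← vecMul_transpose, dotProduct_comm,
        dotProduct_comm p, ← dotProduct_mulVec, vecMul_transpose]
    rw [this, ← smul_eq_mul (√h), ← dotProduct_smul, ← mulVec_smul, ← smul_eq_mul (1 / h),
      ← dotProduct_smul]
    change _ = ψ (epos μ σ h t x z) * (p ⬝ᵥ H1w σ h t x (√h • z))
    rw [dotProduct, Finset.mul_sum]
    exact Finset.sum_congr rfl fun i _ => by ring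
  have k2 : ∑ i, ∑ j, Γ i j * (ψ (epos μ σ h t x z) * H2w σ h t x (√h • z) i j)
      = ψ (epos μ σ h t x z) * (1 / h * (z ⬝ᵥ ((σ t x)⁻¹ * Γ * (σ t x)⁻¹ᵀ) *ᵥ z
        - ((σ t x)⁻¹ * Γ * (σ t x)⁻¹ᵀ).trace)) := by
    have e1 : H2w σ h t x (√h • z)
        = (1 / h) • ((σ t x)⁻¹ᵀ * (vecMulVec z z - 1) * (σ t x)⁻¹) := by
      unfold H2w
      have : vecMulVec (√h • z) (√h • z) - h • (1 : Mat d) = h • (vecMulVec z z - 1) := by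
        rw [smul_vecMulVec, vecMulVec_smul, smul_smul, Real.mul_self_sqrt hh.le, smul_sub]
      rw [this, ← transpose_nonsing_inv, Matrix.mul_smul, Matrix.smul_mul, smul_smul]
      congr 1
      field_simp
    have sy : (H2w σ h t x (√h • z))ᵀ = H2w σ h t x (√h • z) := by
      rw [e1, transpose_smul, transpose_mul, transpose_mul, transpose_transpose, transpose_sub,
        transpose_one, transpose_vecMulVec, Matrix.mul_assoc]
    have e2' : ∑ i, ∑ j, Γ i j * H2w σ h t x (√h • z) i j = (Γ * H2w σ h t x (√h • z)).trace := by
      conv_rhs => rw [← sy]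
      simp [Matrix.trace, Matrix.mul_apply]
    have e3 : (Γ * H2w σ h t x (√h • z)).trace = 1 / h *
        (z ⬝ᵥ ((σ t x)⁻¹ * Γ * (σ t x)⁻¹ᵀ) *ᵥ z - ((σ t x)⁻¹ * Γ * (σ t x)⁻¹ᵀ).trace) := by
      rw [e1, Matrix.mul_smul, trace_smul, smul_eq_mul]
      congr 1
      rw [← trace_mul_vecMulVec_self, ← trace_sub]
      rw [← Matrix.mul_assoc, ← Matrix.mul_assoc, trace_mul_comm, ← Matrix.mul_assoc,
        ← Matrix.mul_assoc, Matrix.mul_sub, Matrix.mul_one]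
    rw [← e3, ← e2', Finset.mul_sum]
    refine Finset.sum_congr rfl fun i _ => ?_
    rw [Finset.mul_sum]
    exact Finset.sum_congr rfl fun j _ => by ring
  rw [k1, k2]
  unfold wt
  field_simp
  ring

/-- Comparison of the one-step operator at two points and for two functions. -/
lemma Coeff.step_diff {d : ℕ} {Q : ℝ} {F : ℝ → Vec d → ℝ → Vec d → Mat d → ℝ}
    {μ : ℝ → Vec d → Vec d} {σ : ℝ → Vec d → Mat d} (C : Coeff Q F μ σ) {h : ℝ} (t : ℝ)
    (hh : 0 < h) (hQ : h ≤ Q) {ψ ψ' : Vec d → ℝ} (hψ : Continuous ψ) (hψ' : Continuous ψ')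
    {M M' : ℝ} (hM : ∀ x, |ψ x| ≤ M) (hM' : ∀ x, |ψ' x| ≤ M') (x x' : Vec d) :
    ∃ (r : ℝ) (p : Vec d) (Γ : Mat d), ‖p‖ ≤ Q ∧ ‖Γ‖ ≤ Q ∧
      WtOK Q h r ((σ t x)⁻¹ *ᵥ p) ((σ t x)⁻¹ * Γ * (σ t x)⁻¹ᵀ) ∧
      step F μ σ h t ψ x - step F μ σ h t ψ' x'
        ≤ h * (Q * ‖x - x'‖) + (linStep μ σ h t r p Γ ψ x - linStep μ σ h t r p Γ ψ' x') := by
  obtain ⟨r, p, Γ, h1, h2, h3, h4⟩ := C.lin t x x'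
    (∫ w, ψ (euler μ σ h t x w) ∂gaussVec d h) (∫ w, ψ' (euler μ σ h t x' w) ∂gaussVec d h)
    (fun i => ∫ w, ψ (euler μ σ h t x w) * H1w σ h t x w i ∂gaussVec d h)
    (fun i => ∫ w, ψ' (euler μ σ h t x' w) * H1w σ h t x' w i ∂gaussVec d h)
    (Matrix.of fun i j => ∫ w, ψ (euler μ σ h t x w) * H2w σ h t x w i j ∂gaussVec d h)
    (Matrix.of fun i j => ∫ w, ψ' (euler μ σ h t x' w) * H2w σ h t x' w i j ∂gaussVec d h)
  refine ⟨r, p, Γ, h2, h3, h4 h hh hQ, ?_⟩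
  rw [← linStep_eq μ σ hh r p Γ hψ hM x, ← linStep_eq μ σ hh r p Γ hψ' hM' x']
  have h5 := mul_le_mul_of_nonneg_left h1 hh.le
  rw [dotProduct_sub] at h5
  simp only [mul_sub, Finset.sum_sub_distrib, Matrix.of_apply] at h5
  unfold step
  linarith

/-- The standing assumptions yield uniform constants. Time Hölder continuity of the coefficients
enters only at equal times, as Lipschitz continuity in space. -/
lemma exists_coeff {d : ℕ} (T : ℝ) (hT : 0 < T)
    (μ : ℝ → Vec d → Vec d) (σ : ℝ → Vec d → Mat d)
    (hμbdd : ∃ C : ℝ, ∀ s y, ‖μ s y‖ ≤ C)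
    (hσbdd : ∃ C : ℝ, ∀ s y, ‖σ s y‖ ≤ C)
    (hμreg : ∃ L : ℝ, ∀ s s' : ℝ, ∀ y y' : Vec d,
      ‖μ s y - μ s' y'‖ ≤ L * (‖y - y'‖ + Real.sqrt |s - s'|))
    (hσreg : ∃ L : ℝ, ∀ s s' : ℝ, ∀ y y' : Vec d,
      ‖σ s y - σ s' y'‖ ≤ L * (‖y - y'‖ + Real.sqrt |s - s'|))
    (hσinv : ∀ s y, IsUnit (σ s y).det)
    (hσinvbdd : ∃ C : ℝ, ∀ s y, ‖(σ s y)⁻¹‖ ≤ C)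
    (F Fr : ℝ → Vec d → ℝ → Vec d → Mat d → ℝ)
    (Fp : ℝ → Vec d → ℝ → Vec d → Mat d → Vec d)
    (Fγ : ℝ → Vec d → ℝ → Vec d → Mat d → Mat d)
    (hF : AssumptionF d σ F Fr Fp Fγ) : ∃ Q, T ≤ Q ∧ Coeff Q F μ σ := by
  obtain ⟨Cμ, hCμ⟩ := hμbdd
  obtain ⟨Cσ, hCσ⟩ := hσbdd
  obtain ⟨Lμ, hLμ⟩ := hμreg
  obtain ⟨Lσ, hLσ⟩ := hσreg
  obtain ⟨CS', hCS'⟩ := hσinvbdd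
  obtain ⟨L, L0, hL⟩ := hF.lipschitz
  obtain ⟨C0, hC0⟩ := hF.bound_at_zero
  obtain ⟨K, K0, hK⟩ := hF.lower_bound
  set CS := |CS'| with hCSdef
  have CS0 : 0 ≤ CS := abs_nonneg _
  have hCS : ∀ s y, ‖(σ s y)⁻¹‖ ≤ CS := fun s y => (hCS' s y).trans (le_abs_self _)
  have d0 : (0:ℝ) ≤ d := Nat.cast_nonneg d
  have t1 : 0 ≤ d * CS * (3 * L) := by positivity
  have t2 : 0 ≤ d * (d * CS * (3 * L)) * CS := by positivity
  set Q := 1 + d + T + |Cμ| + |Cσ| + CS + |Lμ| + |Lσ| + 3 * L + |C0| + K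
    + d * CS * (3 * L) + d * (d * CS * (3 * L)) * CS with hQ
  have a1 := abs_nonneg Cμ
  have a2 := abs_nonneg Cσ
  have a3 := abs_nonneg Lμ
  have a4 := abs_nonneg Lσ
  have a5 := abs_nonneg C0
  have b1 := le_abs_self Cμ
  have b2 := le_abs_self Cσ
  have b3 := le_abs_self Lμ
  have b4 := le_abs_self Lσ
  have b5 := le_abs_self C0
  refine ⟨Q, by linarith, by linarith, by linarith, fun t x => (hCμ t x).trans (by linarith),
    fun t x => (hCσ t x).trans (by linarith), fun t x => (hCS t x).trans (by linarith), hσinv,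
    fun t x y => ?_, fun t x y => ?_, fun t x c => ?_, ?_⟩
  · have := hLμ t t x y
    simp only [sub_self, abs_zero, Real.sqrt_zero, add_zero] at this
    refine this.trans ?_
    gcongr; linarith
  · have := hLσ t t x y
    simp only [sub_self, abs_zero, Real.sqrt_zero, add_zero] at this
    refine this.trans ?_
    gcongr; linarith
  · have h1 := hL t x x c 0 0 0 0 0
    simp only [sub_self, norm_zero, zero_add, add_zero, sub_zero] at h1
    have h2 := hC0 t x
    have h3 := abs_sub_abs_le_abs_sub (F t x c 0 0) (F t x 0 0 0)
    have h4 : L * |c| ≤ Q * |c| := by gcongr; linarith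
    linarith
  · intro t x x' a a' b b' c c'
    set f : ℝ × Vec d × Mat d → ℝ := fun q => F t x q.1 q.2.1 q.2.2 with hf
    have hlip : LipschitzWith (3 * L).toNNReal f := by
      refine LipschitzWith.of_dist_le' fun u v => ?_
      rw [Real.dist_eq, dist_eq_norm]
      refine (hL t x x u.1 v.1 u.2.1 v.2.1 u.2.2 v.2.2).trans ?_
      have h1 : |u.1 - v.1| ≤ ‖u - v‖ := norm_fst_le (u - v)
      have h2 : ‖u.2.1 - v.2.1‖ ≤ ‖u - v‖ := (norm_fst_le (u - v).2).trans (norm_snd_le (u - v))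
      have h3 : ‖u.2.2 - v.2.2‖ ≤ ‖u - v‖ := (norm_snd_le (u - v).2).trans (norm_snd_le (u - v))
      rw [sub_self, norm_zero, mul_comm 3 L, mul_assoc]
      gcongr
      linarith
    obtain ⟨⟨ρ, ϖ, γ⟩, -, hz⟩ := domain_mvt (f := f) (s := Set.univ) (x := (a', b', c'))
      (y := (a, b, c)) (f' := fun q => fderiv ℝ f q)
      (fun q _ => (hF.differentiable t x q.1 q.2.1 q.2.2).hasFDerivAt.hasFDerivWithinAt)
      convex_univ (Set.mem_univ _) (Set.mem_univ _)
    have hder := hF.deriv_eq t x ρ ϖ γ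
    rw [← hf] at hder
    have hn : ∀ q, ‖q‖ ≤ 1 → |fderiv ℝ f (ρ, ϖ, γ) q| ≤ 3 * L := fun q hq => by
      refine ((fderiv ℝ f (ρ, ϖ, γ)).le_opNorm q).trans ?_
      have h1 := norm_fderiv_le_of_lipschitz ℝ (x₀ := (ρ, ϖ, γ)) hlip
      rw [Real.coe_toNNReal _ (by positivity)] at h1
      exact (mul_le_mul h1 hq (norm_nonneg _) (by positivity)).trans_eq (mul_one _)
    have hr : |Fr t x ρ ϖ γ| ≤ 3 * L := by
      have := hn (1, 0, 0) (by simp [Prod.norm_def])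
      rw [hder] at this
      simpa using this
    have hp : ‖Fp t x ρ ϖ γ‖ ≤ 3 * L := by
      refine (pi_norm_le_iff_of_nonneg (by positivity)).2 fun i => ?_
      have := hn (0, Pi.single i 1, 0) (by simp [Prod.norm_def, Pi.norm_single])
      rw [hder] at this
      simpa using this
    have hΓ : ‖Fγ t x ρ ϖ γ‖ ≤ 3 * L := by
      refine (Matrix.norm_le_iff (by positivity)).2 fun i j => ?_
      have h1 : ‖(Matrix.single i j (1:ℝ))‖ ≤ 1 := by
        refine (Matrix.norm_le_iff zero_le_one).2 fun k l => ?_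
        rw [Matrix.single_apply]; split_ifs <;> simp
      have := hn (0, 0, Matrix.single i j 1) (by simp [Prod.norm_def, h1])
      rw [hder] at this
      simpa [Matrix.single_apply, ite_and] using this
    refine ⟨Fr t x ρ ϖ γ, Fp t x ρ ϖ γ, Fγ t x ρ ϖ γ, ?_, by linarith, by linarith,
      fun h hh hle => ?_⟩
    · have h1 := hL t x x' a' a' b' b' c' c'
      simp only [sub_self, norm_zero, abs_zero, add_zero] at h1
      have h2 := hz.trans (hder ((a, b, c) - (a', b', c')))
      simp only [hf, Prod.mk_sub_mk, Matrix.sub_apply] at h2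
      have h3 := le_of_abs_le h1
      have h4 : L * ‖x - x'‖ ≤ Q * ‖x - x'‖ := by gcongr; linarith
      linarith
    · set S := (σ t x)⁻¹ with hS
      have nS : ‖S‖ ≤ CS := hCS t x
      refine ⟨hh, hle, by linarith, by linarith, by linarith, ?_, ?_, ?_, ?_, fun z => ?_⟩
      · refine (norm_mulVec_le _ _).trans ?_
        calc d * ‖S‖ * ‖Fp t x ρ ϖ γ‖ ≤ d * CS * (3 * L) := by gcongr
          _ ≤ Q := by linarith
      · refine (norm_matmul_le _ _).trans ?_
        rw [Matrix.norm_transpose]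
        calc d * ‖S * Fγ t x ρ ϖ γ‖ * ‖S‖ ≤ d * (d * CS * (3 * L)) * CS := by
              gcongr
              refine (norm_matmul_le _ _).trans ?_
              gcongr
          _ ≤ Q := by linarith
      · have := (hF.psd t x ρ ϖ γ).mul_mul_conjTranspose_same S
        rwa [conjTranspose_eq_transpose_of_trivial] at this
      · have := hF.trace_le_one t x ρ ϖ γ
        rwa [Matrix.mul_inv_rev, ← transpose_nonsing_inv, ← hS, ← trace_mul_cycle] at this
      · have s0 : 0 < √h := Real.sqrt_pos.2 hh
        have ss : √h * √h = h := Real.mul_self_sqrt hh.le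
        have h1 := hK t x ρ ϖ γ ((√h)⁻¹ • (Sᵀ *ᵥ z))
        have e1 : (S *ᵥ Fp t x ρ ϖ γ) ⬝ᵥ z = Fp t x ρ ϖ γ ⬝ᵥ Sᵀ *ᵥ z := by
          rw [mulVec_transpose, dotProduct_comm, dotProduct_mulVec, dotProduct_comm]
        have e2' : z ⬝ᵥ (S * Fγ t x ρ ϖ γ * Sᵀ) *ᵥ z
            = (Sᵀ *ᵥ z) ⬝ᵥ (Fγ t x ρ ϖ γ *ᵥ (Sᵀ *ᵥ z)) := by
          rw [← mulVec_mulVec, ← mulVec_mulVec, dotProduct_mulVec z S, ← mulVec_transpose]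
        rw [mulVec_smul, dotProduct_smul, dotProduct_smul, smul_dotProduct, smul_eq_mul,
          smul_eq_mul, smul_eq_mul] at h1
        rw [e1, e2']
        have h2 := mul_le_mul_of_nonneg_left h1 hh.le
        have h3 : h * ((√h)⁻¹ * (Fp t x ρ ϖ γ ⬝ᵥ Sᵀ *ᵥ z) + (√h)⁻¹ * ((√h)⁻¹ *
            ((Sᵀ *ᵥ z) ⬝ᵥ (Fγ t x ρ ϖ γ *ᵥ (Sᵀ *ᵥ z)))))
            = √h * (Fp t x ρ ϖ γ ⬝ᵥ Sᵀ *ᵥ z) + (Sᵀ *ᵥ z) ⬝ᵥ (Fγ t x ρ ϖ γ *ᵥ (Sᵀ *ᵥ z)) := by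
          generalize Fp t x ρ ϖ γ ⬝ᵥ Sᵀ *ᵥ z = A
          generalize (Sᵀ *ᵥ z) ⬝ᵥ (Fγ t x ρ ϖ γ *ᵥ (Sᵀ *ᵥ z)) = A'
          conv_lhs => rw [← ss]
          field_simp
          rw [Real.sqrt_sq s0.le]
        rw [h3] at h2
        have h4 : K * h ≤ Q * h := by gcongr; linarith
        linarith

/-! ### Stability and growth of the one-step operator -/

/-- Growth constant of one step. -/
def gr (d : ℕ) (Q : ℝ) : ℝ := 9 * Q + 440 * Q ^ 8 * ∫ z, (1 + ‖z‖) ^ 4 ∂gaussVec d 1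

lemma m4_nonneg (d : ℕ) : 0 ≤ ∫ z, (1 + ‖z‖) ^ 4 ∂gaussVec d 1 :=
  integral_nonneg fun z => by positivity

lemma le_gr (d : ℕ) {Q : ℝ} (hQ : 1 ≤ Q) : 9 * Q ≤ gr d Q := by
  have := m4_nonneg d
  have h0 : 0 ≤ Q ^ 8 := by positivity
  unfold gr
  nlinarith [mul_nonneg h0 this]

lemma integrable_mul_wt {d : ℕ} {Q h r : ℝ} {q : Vec d} {B : Mat d} (H : WtOK Q h r q B)
    {f : Vec d → ℝ} (hf : Continuous f) {K : ℝ} {k : ℕ} (hK : ∀ z, |f z| ≤ K * (1 + ‖z‖) ^ k) :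
    Integrable (fun z => f z * wt h r q B z) (gaussVec d 1) := by
  have Q0 : 0 ≤ Q := zero_le_one.trans H.Q1
  refine integrable_of_poly (hf.mul (continuous_wt _ _ _ _)) (K * (4 * Q ^ 3)) (k + 2) fun z => ?_
  rw [abs_mul]
  calc _ ≤ (K * (1 + ‖z‖) ^ k) * (4 * Q ^ 3 * (1 + ‖z‖) ^ 2) :=
        mul_le_mul (hK z) (H.abs_wt_le z) (abs_nonneg _) ((abs_nonneg _).trans (hK z))
    _ = _ := by ring

lemma norm_affine_le {d : ℕ} (e v : Vec d) (σ : Mat d) (z : Vec d) :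
    ‖e + v + σ *ᵥ z‖ ≤ (‖e‖ + ‖v‖ + d * ‖σ‖) * (1 + ‖z‖) := by
  have h1 := norm_add₃_le (a := e) (b := v) (c := σ *ᵥ z)
  have h2 := norm_mulVec_le σ z
  have z0 := norm_nonneg z
  have h3 : 0 ≤ (‖e‖ + ‖v‖) * ‖z‖ := by positivity
  have h4 : 0 ≤ d * ‖σ‖ := by positivity
  nlinarith

lemma WtOK.integral_le {d : ℕ} {Q h r : ℝ} {q : Vec d} {B : Mat d} (H : WtOK Q h r q B)
    (e m : Vec d) (σ : Mat d) (hm : ‖m‖ ≤ Q) (hσ : ‖σ‖ ≤ Q) {A b : ℝ} (hA : 0 ≤ A) (hb : 0 ≤ b)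
    {f : Vec d → ℝ} (hf : Continuous f)
    (hfb : ∀ z, |f z| ≤ A + b * ((e + h • m + √h • (σ *ᵥ z)) ⬝ᵥ (e + h • m + √h • (σ *ᵥ z)))) :
    ∫ z, f z * wt h r q B z ∂gaussVec d 1
      ≤ A * (1 + gr d Q * h) + b * ((1 + gr d Q * h) * (e ⬝ᵥ e) + gr d Q * h) := by
  have Q0 : 0 ≤ Q := zero_le_one.trans H.Q1
  have hh := H.hh
  set D : Vec d → ℝ := fun z => (e + h • m + √h • (σ *ᵥ z)) ⬝ᵥ (e + h • m + √h • (σ *ᵥ z)) with hD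
  have D0 : ∀ z, 0 ≤ D z := fun z => dot_self_nonneg _
  have cD : Continuous D := by
    simp only [hD]; unfold dotProduct; fun_prop
  set K := ‖e‖ + ‖h • m‖ + d * ‖√h • σ‖ with hK
  have Db : ∀ z, D z ≤ d * K ^ 2 * (1 + ‖z‖) ^ 2 := fun z => by
    refine (dot_self_le _).trans ?_
    have := norm_affine_le e (h • m) (√h • σ) z
    rw [smul_mulVec] at this
    rw [mul_assoc, ← mul_pow]
    gcongr
  have iD : Integrable (fun z => D z * wt h r q B z) (gaussVec d 1) :=
    integrable_mul_wt H cD (K := d * K ^ 2) (k := 2) fun z => by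
      rw [abs_of_nonneg (D0 z)]; exact Db z
  have iD' : Integrable D (gaussVec d 1) :=
    integrable_of_poly cD (d * K ^ 2) 2 fun z => by rw [abs_of_nonneg (D0 z)]; exact Db z
  have iw := (integral_wt h r q B).1
  have iw' : Integrable (fun z => wt h r q B z + 8 * Q * h) (gaussVec d 1) :=
    iw.add (integrable_const _)
  have iDw : Integrable (fun z => (wt h r q B z + 8 * Q * h) * D z) (gaussVec d 1) := by
    refine (iD.add (iD'.const_mul (8 * Q * h))).congr (Filter.Eventually.of_forall fun z => ?_)
    simp only [Pi.add_apply]; ring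
  have aw : ∀ z, |wt h r q B z| ≤ wt h r q B z + 8 * Q * h := fun z => by
    have h1 := H.low_half z
    have h2 := psd_dot_nonneg H.psd z
    have : 0 ≤ Q * h := by positivity
    rw [abs_le]; constructor <;> linarith
  have pt : ∀ z, ‖f z * wt h r q B z‖ ≤
      A * (wt h r q B z + 8 * Q * h) + b * ((wt h r q B z + 8 * Q * h) * D z) := fun z => by
    rw [norm_mul]
    calc _ ≤ (A + b * D z) * (wt h r q B z + 8 * Q * h) :=
          mul_le_mul (hfb z) (aw z) (abs_nonneg _) ((abs_nonneg _).trans (hfb z))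
      _ = _ := by ring
  have ig := (iw'.const_mul A).add (iDw.const_mul b)
  have if' : Integrable (fun z => f z * wt h r q B z) (gaussVec d 1) :=
    ig.mono' (hf.mul (continuous_wt _ _ _ _)).aestronglyMeasurable (Filter.Eventually.of_forall pt)
  refine (integral_mono if' ig fun z => (le_abs_self _).trans (pt z)).trans ?_
  rw [integral_add' (iw'.const_mul A) (iDw.const_mul b), integral_const_mul, integral_const_mul,
    integral_add iw (integrable_const _), (integral_wt h r q B).2]
  simp only [integral_const, probReal_univ, one_smul]
  have m0 := m4_nonneg d
  have sm := H.second_moment e m σ hm hσ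
  have g1 := le_gr d H.Q1
  have g2 : 38 * Q ^ 8 * ∫ z, (1 + ‖z‖) ^ 4 ∂gaussVec d 1 ≤ gr d Q := by
    unfold gr
    nlinarith [mul_nonneg (pow_nonneg Q0 8) m0]
  have g3 : 9 * Q + 38 * Q ^ 8 * ∫ z, (1 + ‖z‖) ^ 4 ∂gaussVec d 1 ≤ gr d Q := by
    unfold gr
    nlinarith [mul_nonneg (pow_nonneg Q0 8) m0]
  have ee := dot_self_nonneg e
  gcongr ?_ + b * ?_
  · refine mul_le_mul_of_nonneg_left ?_ hA
    have := le_of_abs_le H.hr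
    nlinarith
  · refine sm.trans ?_
    gcongr

section
variable {d : ℕ} {Q : ℝ} {F : ℝ → Vec d → ℝ → Vec d → Mat d → ℝ}
    {μ : ℝ → Vec d → Vec d} {σ : ℝ → Vec d → Mat d}

lemma Coeff.step_stab (C : Coeff Q F μ σ) {h : ℝ} (t : ℝ)
    (hh : 0 < h) (hQ : h ≤ Q) {ψ ψ' : Vec d → ℝ} (hψ : Continuous ψ) (hψ' : Continuous ψ')
    {M M' : ℝ} (hM : ∀ x, |ψ x| ≤ M) (hM' : ∀ x, |ψ' x| ≤ M') {δ : ℝ}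
    (hδ : ∀ x, |ψ x - ψ' x| ≤ δ) (x : Vec d) :
    step F μ σ h t ψ x - step F μ σ h t ψ' x ≤ δ * (1 + gr d Q * h) := by
  obtain ⟨r, p, Γ, -, -, H, hs⟩ := C.step_diff t hh hQ hψ hψ' hM hM' x x
  refine hs.trans ?_
  have δ0 : 0 ≤ δ := (abs_nonneg _).trans (hδ 0)
  have cX := continuous_epos μ σ h t x
  have i1 := integrable_mul_wt H (hψ.comp cX) (K := M) (k := 0) fun z => by simpa using hM _
  have i2 := integrable_mul_wt H (hψ'.comp cX) (K := M') (k := 0) fun z => by simpa using hM' _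
  unfold linStep
  have e := integral_sub i1 i2
  simp only [Function.comp_apply, ← sub_mul] at e
  rw [← e, sub_self, norm_zero, mul_zero, mul_zero, zero_add]
  refine (H.integral_le 0 0 0 (by simpa using zero_le_one.trans C.Q1)
    (by simpa using zero_le_one.trans C.Q1) δ0 le_rfl
    ((hψ.comp cX).sub (hψ'.comp cX)) fun z => ?_).trans ?_
  · simpa using hδ _
  · simp

lemma step_zero (h t : ℝ) (x : Vec d) :
    step F μ σ h t (fun _ => 0) x = h * F t x 0 0 0 := by
  unfold step
  simp only [zero_mul, integral_zero, zero_add]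
  rfl

lemma linStep_zero (h t r : ℝ) (p : Vec d) (Γ : Mat d) (x : Vec d) :
    linStep μ σ h t r p Γ (fun _ => 0) x = 0 := by
  unfold linStep
  simp

/-- A quadratic bound around a constant `c` propagates through one step, up to terms of
order `h`. -/
lemma Coeff.step_quad (C : Coeff Q F μ σ) {h : ℝ} (t : ℝ)
    (hh : 0 < h) (hQ : h ≤ Q) {ψ : Vec d → ℝ} (hψ : Continuous ψ) {M : ℝ} (hM : ∀ x, |ψ x| ≤ M)
    {A b c : ℝ} (hA : 0 ≤ A) (hb : 0 ≤ b) (x₀ : Vec d)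
    (hq : ∀ y, |ψ y - c| ≤ A + b * ((y - x₀) ⬝ᵥ (y - x₀))) (x : Vec d) :
    |step F μ σ h t ψ x - c| ≤ A * (1 + gr d Q * h)
      + b * ((1 + gr d Q * h) * ((x - x₀) ⬝ᵥ (x - x₀)) + gr d Q * h) + h * (Q + Q * |c|) := by
  have cX := continuous_epos μ σ h t x
  have F0 : |F t x 0 0 0| ≤ Q := by simpa using C.F0 t x 0
  have hF0 := abs_le.1 F0
  have hX : ∀ z, epos μ σ h t x z - x₀ = (x - x₀) + h • μ t x + √h • (σ t x *ᵥ z) := fun z => by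
    unfold epos; abel
  -- `∫ ψ(X) wt = ∫ (ψ(X) - c) wt + c (1 + h r)`
  have split : ∀ {r p Γ}, WtOK Q h r ((σ t x)⁻¹ *ᵥ p) ((σ t x)⁻¹ * Γ * (σ t x)⁻¹ᵀ) →
      ∀ s : ℝ, s * linStep μ σ h t r p Γ ψ x = (∫ z, (s * (ψ (epos μ σ h t x z) - c)) *
        wt h r ((σ t x)⁻¹ *ᵥ p) ((σ t x)⁻¹ * Γ * (σ t x)⁻¹ᵀ) z ∂gaussVec d 1)
          + s * c * (1 + h * r) := fun {r p Γ} H s => by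
    have i1 := integrable_mul_wt H (hψ.comp cX) (K := M) (k := 0) fun z => by simpa using hM _
    have iw := integral_wt h r ((σ t x)⁻¹ *ᵥ p) ((σ t x)⁻¹ * Γ * (σ t x)⁻¹ᵀ)
    have e := integral_sub (i1.const_mul s) (iw.1.const_mul (s * c))
    rw [integral_const_mul, integral_const_mul, iw.2] at e
    unfold linStep
    simp only [Function.comp_apply] at e
    rw [← sub_eq_iff_eq_add, ← e]
    congr 1
    ext z
    ring
  have bd : ∀ {r p Γ}, WtOK Q h r ((σ t x)⁻¹ *ᵥ p) ((σ t x)⁻¹ * Γ * (σ t x)⁻¹ᵀ) →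
      ∀ s : ℝ, |s| = 1 → s * linStep μ σ h t r p Γ ψ x - s * c ≤ A * (1 + gr d Q * h)
      + b * ((1 + gr d Q * h) * ((x - x₀) ⬝ᵥ (x - x₀)) + gr d Q * h) + h * (Q * |c|) :=
    fun {r p Γ} H s hs => by
    rw [split H s]
    have h1 := H.integral_le (x - x₀) (μ t x) (σ t x) (C.hμ t x) (C.hσ t x) hA hb
      (f := fun z => s * (ψ (epos μ σ h t x z) - c))
      (continuous_const.mul ((hψ.comp cX).sub continuous_const)) fun z => by
        rw [← hX, abs_mul, hs, one_mul]; exact hq _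
    have h2 : s * c * (h * r) ≤ h * (Q * |c|) := by
      calc s * c * (h * r) ≤ |s * c * (h * r)| := le_abs_self _
        _ = h * (|r| * |c|) := by
          rw [abs_mul, abs_mul, abs_mul, hs, abs_of_pos hh]; ring
        _ ≤ _ := by gcongr; exact H.hr
    linarith
  rw [abs_le]
  constructor
  · obtain ⟨r, p, Γ, -, -, H, hs⟩ := C.step_diff t hh hQ (continuous_const (y := (0:ℝ))) hψ
      (M := 0) (by simp) hM x x
    rw [step_zero, linStep_zero, sub_self, norm_zero] at hs
    have h1 := bd H (-1) (by simp)
    nlinarith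
  · obtain ⟨r, p, Γ, -, -, H, hs⟩ := C.step_diff t hh hQ hψ (continuous_const (y := (0:ℝ)))
      hM (M' := 0) (by simp) x x
    rw [step_zero, linStep_zero, sub_self, norm_zero] at hs
    have h1 := bd H 1 (by simp)
    nlinarith

end

/-! ### The Lipschitz estimate for smooth functions -/

lemma abs_affine_le {d : ℕ} (c : Vec d) (N : Mat d) (z : Vec d) :
    |z ⬝ᵥ (c + N *ᵥ z) - N.trace| ≤ (d * ‖c‖ + (d * d + d) * ‖N‖) * (1 + ‖z‖) ^ 2 := by
  have h1 := abs_dot_le z (c + N *ᵥ z)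
  have h2 := norm_add_le c (N *ᵥ z)
  have h3 := norm_mulVec_le N z
  have h4 := abs_trace_le N
  have h5 := abs_sub (z ⬝ᵥ (c + N *ᵥ z)) N.trace
  have z0 := norm_nonneg z
  have e0 : (0:ℝ) ≤ d * ‖c‖ := by positivity
  have e1 : (0:ℝ) ≤ d * ‖N‖ := by positivity
  have e2 : (0:ℝ) ≤ d * (d * ‖N‖) := by positivity
  have h6 : d * ‖z‖ * ‖c + N *ᵥ z‖ ≤ d * ‖z‖ * (‖c‖ + d * ‖N‖ * ‖z‖) := by
    gcongr; linarith
  have k0 := mul_nonneg e0 z0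
  have k1 := mul_nonneg e1 z0
  have k2 := mul_nonneg e2 z0
  have k3 := mul_nonneg k0 z0
  have k4 := mul_nonneg k1 z0
  nlinarith

lemma wt_sub {d : ℕ} (h r : ℝ) (q q' : Vec d) (B B' : Mat d) (z : Vec d) :
    wt h r q B z - wt h r q' B' z
      = z ⬝ᵥ (√h • (q - q') + (B - B') *ᵥ z) - (B - B').trace := by
  unfold wt
  rw [dotProduct_add, dotProduct_smul, dotProduct_sub, sub_mulVec, dotProduct_sub, trace_sub,
    dotProduct_comm q, dotProduct_comm q', smul_eq_mul]
  ring

lemma abs_wt_le' {d : ℕ} (h r : ℝ) (q : Vec d) (B : Mat d) (z : Vec d) :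
    |wt h r q B z|
      ≤ (1 + |h * r| + (d * ‖√h • q‖ + (d * d + d) * ‖B‖)) * (1 + ‖z‖) ^ 2 := by
  have e : wt h r q B z = (1 + h * r) + (z ⬝ᵥ (√h • q + B *ᵥ z) - B.trace) := by
    unfold wt
    rw [dotProduct_add, dotProduct_smul, dotProduct_comm q, smul_eq_mul]
    ring
  have h1 := abs_affine_le (√h • q) B z
  have h2 : |1 + h * r| ≤ (1 + |h * r|) * (1 + ‖z‖) ^ 2 := by
    have : |1 + h * r| ≤ 1 + |h * r| := by simpa using abs_add_le 1 (h * r)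
    exact this.trans (le_mul_of_one_le_right (by positivity)
      (one_le_pow₀ (by linarith [norm_nonneg z])))
  rw [e]
  have := abs_add_le (1 + h * r) (z ⬝ᵥ (√h • q + B *ᵥ z) - B.trace)
  linarith

lemma WtOK.mono {d : ℕ} {Q Q' h r : ℝ} {q : Vec d} {B : Mat d} (H : WtOK Q h r q B)
    (hQ : Q ≤ Q') : WtOK Q' h r q B where
  hh := H.hh
  hle := H.hle.trans hQ
  Q1 := H.Q1.trans hQ
  dQ := H.dQ.trans hQ
  hr := H.hr.trans hQ
  hq := H.hq.trans hQ
  hB := H.hB.trans hQ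
  psd := H.psd
  tr := H.tr
  low z := by
    have := mul_le_mul_of_nonneg_right hQ H.hh.le
    linarith [H.low z]

/-- First order expansion of the weight under a perturbation `S' = (1 + Θ) S` of the inverse
volatility. -/
lemma wt_expand {d : ℕ} (h r : ℝ) (p : Vec d) (Γ S S' Θ : Mat d) (hS : S' = S + Θ * S)
    (hB : (S * Γ * Sᵀ)ᵀ = S * Γ * Sᵀ) (z : Vec d) :
    wt h r (S *ᵥ p) (S * Γ * Sᵀ) z - wt h r (S' *ᵥ p) (S' * Γ * S'ᵀ) z
      = (z ⬝ᵥ (-(√h • (Θ *ᵥ (S *ᵥ p))) + (-(2:ℝ) • (Θ * (S * Γ * Sᵀ))) *ᵥ z)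
          - (-(2:ℝ) • (Θ * (S * Γ * Sᵀ))).trace)
        - (z ⬝ᵥ (0 + (Θ * (S * Γ * Sᵀ) * Θᵀ) *ᵥ z) - (Θ * (S * Γ * Sᵀ) * Θᵀ).trace) := by
  set B := S * Γ * Sᵀ with hBdef
  have e1 : S *ᵥ p - S' *ᵥ p = -(Θ *ᵥ (S *ᵥ p)) := by
    rw [hS, add_mulVec, ← mulVec_mulVec]; abel
  have e2 : B - S' * Γ * S'ᵀ = -(Θ * B) - (Θ * B)ᵀ - Θ * B * Θᵀ := by
    rw [transpose_mul, hB, hS, transpose_add, transpose_mul, hBdef]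
    noncomm_ring
  have e3 : z ⬝ᵥ (Θ * B)ᵀ *ᵥ z = z ⬝ᵥ (Θ * B) *ᵥ z := by
    rw [mulVec_transpose, dotProduct_comm, ← dotProduct_mulVec]
  rw [wt_sub, e1, e2]
  simp only [dotProduct_add, sub_mulVec, neg_mulVec, dotProduct_sub, dotProduct_neg, trace_sub,
    trace_neg, trace_transpose, e3, smul_mulVec, dotProduct_smul, trace_smul, smul_eq_mul,
    smul_neg, zero_add]
  ring

/-- Bounded continuously differentiable functions with `L` bounding the Euclidean norm of the
gradient and `K` a Lipschitz constant of the derivative (in operator norm). -/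
structure Smooth {d : ℕ} (ψ : Vec d → ℝ) (D : Vec d → Vec d →L[ℝ] ℝ) (M L K : ℝ) : Prop where
  bdd : ∀ x, |ψ x| ≤ M
  hd : ∀ x, HasFDerivAt ψ (D x) x
  grad : ∀ x v, |D x v| ≤ L * e2 v
  lip : ∀ x y, ‖D x - D y‖ ≤ K * ‖x - y‖

section
variable {d : ℕ} {ψ : Vec d → ℝ} {D : Vec d → Vec d →L[ℝ] ℝ} {M L K : ℝ}

lemma Smooth.cont (P : Smooth ψ D M L K) : Continuous ψ :=
  continuous_iff_continuousAt.2 fun z => (P.hd z).continuousAt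

lemma Smooth.contD (P : Smooth ψ D M L K) : Continuous D := by
  have : LipschitzWith K.toNNReal D := LipschitzWith.of_dist_le_mul fun x y => by
    rw [dist_eq_norm, dist_eq_norm]
    refine (P.lip x y).trans ?_
    gcongr
    exact Real.le_coe_toNNReal K
  exact this.continuous

lemma Smooth.norm_le (P : Smooth ψ D M L K) (hL : 0 ≤ L) (x : Vec d) : ‖D x‖ ≤ L * (d + 1) := by
  refine ContinuousLinearMap.opNorm_le_bound _ (by positivity) fun v => ?_
  refine (P.grad x v).trans ?_
  rw [mul_assoc]
  gcongr
  exact e2_le v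

lemma Smooth.taylor (P : Smooth ψ D M L K) (hK : 0 ≤ K) (x y : Vec d) :
    |ψ x - ψ y - D x (x - y)| ≤ K * ‖x - y‖ ^ 2 := by
  have := (convex_segment x y).norm_image_sub_le_of_norm_hasFDerivWithin_le'
    (f := ψ) (f' := D) (φ := D x) (C := K * ‖x - y‖)
    (fun w _ => (P.hd w).hasFDerivWithinAt) (fun w hw => ?_)
    (right_mem_segment ℝ x y) (left_mem_segment ℝ x y)
  · rw [sq, ← mul_assoc]; exact this
  · refine (P.lip w x).trans ?_
    gcongr
    have := norm_sub_le_of_mem_segment hw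
    rw [norm_sub_rev x y]
    exact this

end

section
variable {d : ℕ} {Q : ℝ} {F : ℝ → Vec d → ℝ → Vec d → Mat d → ℝ}
    {μ : ℝ → Vec d → Vec d} {σ : ℝ → Vec d → Mat d}
    {ψ : Vec d → ℝ} {D : Vec d → Vec d →L[ℝ] ℝ} {M L K : ℝ}

set_option maxHeartbeats 1000000 in
/-- Differentiating the linear one-step functional in `x`: the derivative of the weight is turned
into a derivative of `ψ` by Gaussian integration by parts, and the resulting vector paired with the
gradient of `ψ` is `gradVec`. All remaining terms are quadratic in `x - x'`. -/
lemma Coeff.linStep_local (C : Coeff Q F μ σ) {h : ℝ} (t : ℝ) (hh : 0 < h)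
    (P : Smooth ψ D M L K) (hL : 0 ≤ L) (hK : 0 ≤ K) :
    ∃ R, ∀ (x x' : Vec d) (r : ℝ) (p : Vec d) (Γ : Mat d), ‖p‖ ≤ Q → ‖Γ‖ ≤ Q →
      WtOK Q h r ((σ t x)⁻¹ *ᵥ p) ((σ t x)⁻¹ * Γ * (σ t x)⁻¹ᵀ) →
      linStep μ σ h t r p Γ ψ x - linStep μ σ h t r p Γ ψ x'
        ≤ L * (e2 (x - x') * (1 + gr d (Q ^ 5) * h)) + R * ‖x - x'‖ ^ 2 := by
  have Q1 := C.Q1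
  have Q0 : 0 ≤ Q := zero_le_one.trans Q1
  have M0 : 0 ≤ M := (abs_nonneg _).trans (P.bdd 0)
  set s := √h with hs
  have s0 : 0 ≤ s := Real.sqrt_nonneg h
  set k1 := 1 + h * Q + d * (s * Q) with hk1
  set θ := d * Q * Q with hθ
  set a1 := (d * d + d) * (d * (d * θ * Q) * θ) with ha1
  set a2 := d * (s * (d * (d * θ * Q) * Q))
    + (d * d + d) * (d * (d * (d * θ * Q) * Q) * Q + d * (d * Q * Q) * (d * θ * Q)) with ha2
  set a3 := 1 + h * Q + (d * (s * (d * Q * Q)) + (d * d + d) * (d * (d * Q * Q) * Q)) with ha3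
  have k10 : 0 ≤ k1 := by positivity
  have θ0 : 0 ≤ θ := by positivity
  have a20 : 0 ≤ a2 := by positivity
  have a30 : 0 ≤ a3 := by positivity
  refine ⟨(M * a1 + L * (d + 1) * k1 * a2 + K * k1 ^ 2 * a3) *
    ∫ z, (1 + ‖z‖) ^ 4 ∂gaussVec d 1, fun x x' r p Γ hp hΓ H => ?_⟩
  rcases (e2_nonneg (x - x')).eq_or_lt with ha | ha
  · have hx : ‖x - x'‖ ≤ 0 := (norm_le_e2 _).trans ha.symm.le
    have hx' : x = x' := sub_eq_zero.1 (norm_le_zero_iff.1 hx)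
    subst hx'
    rw [← ha]; simp
  set δ := ‖x - x'‖ with hδ
  have δ0 : 0 ≤ δ := norm_nonneg _
  set S := (σ t x)⁻¹ with hS
  set S' := (σ t x')⁻¹ with hS'
  set Sg := σ t x - σ t x' with hSg
  set m := μ t x - μ t x' with hm
  set Θ := S' * Sg with hΘ
  set q := S *ᵥ p with hq
  set q' := S' *ᵥ p with hq'
  set B := S * Γ * Sᵀ with hB
  set B' := S' * Γ * S'ᵀ with hB'
  have u1 : σ t x * S = 1 := mul_nonsing_inv _ (C.inv t x)
  have u2 : S' * σ t x' = 1 := nonsing_inv_mul _ (C.inv t x')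
  have eS : S' = S + Θ * S := by
    rw [hΘ, hSg, Matrix.mul_sub, u2, Matrix.sub_mul, Matrix.one_mul, Matrix.mul_assoc, u1,
      Matrix.mul_one]
    abel
  have nS : ‖S‖ ≤ Q := C.hS t x
  have nS' : ‖S'‖ ≤ Q := C.hS t x'
  have nSg : ‖Sg‖ ≤ Q * δ := C.lσ t x x'
  have nm : ‖m‖ ≤ Q * δ := C.lμ t x x'
  have nΘ : ‖Θ‖ ≤ θ * δ := by
    refine (norm_matmul_le _ _).trans ?_
    calc _ ≤ d * Q * (Q * δ) := by gcongr
      _ = _ := by rw [hθ]; ring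
  have hBt : Bᵀ = B := by
    have := H.psd.isHermitian
    rwa [Matrix.IsHermitian, conjTranspose_eq_transpose_of_trivial] at this
  set Ξ := σ t x * Θ with hΞ
  have nΞ : ‖Ξ‖ ≤ Q ^ 5 * δ := by
    refine (norm_matmul_le _ _).trans ?_
    calc (d:ℝ) * ‖σ t x‖ * ‖Θ‖ ≤ Q * Q * (Q * Q * Q * δ) := by
          have : ‖Θ‖ ≤ Q * Q * Q * δ := nΘ.trans (by rw [hθ]; gcongr; exact C.dQ)
          gcongr
          · exact C.dQ
          · exact C.hσ t x
      _ = _ := by ring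
  have QQ : Q ≤ Q ^ 5 := le_self_pow₀ Q1 (by norm_num)
  have δa : δ ≤ e2 (x - x') := norm_le_e2 _
  obtain ⟨U, iU, bU, IU⟩ := (H.mono QQ).grad_bound (m := m) (Sg := Sg) (Ξ := Ξ) ha
    (nm.trans (by gcongr)) (nSg.trans (by gcongr)) (nΞ.trans (by gcongr))
  -- the Euler points and their difference
  set X := epos μ σ h t x with hX
  set X' := epos μ σ h t x' with hX'
  have cX := continuous_epos μ σ h t x
  have cX' := continuous_epos μ σ h t x'
  have dX : ∀ z, X z - X' z = (x - x') + h • m + s • (Sg *ᵥ z) := fun z => by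
    rw [hX, hX', hm, hSg, sub_mulVec]
    unfold epos
    rw [smul_sub, smul_sub]
    abel
  have nX : ∀ z, ‖X z - X' z‖ ≤ k1 * δ * (1 + ‖z‖) := fun z => by
    rw [dX, ← smul_mulVec]
    refine (norm_affine_le _ _ _ _).trans ?_
    gcongr
    rw [norm_smul, norm_smul, Real.norm_of_nonneg hh.le, Real.norm_of_nonneg s0, hk1]
    calc _ ≤ δ + h * (Q * δ) + d * (s * (Q * δ)) := by gcongr
      _ = _ := by ring
  set lin : Vec d → ℝ := fun z => z ⬝ᵥ (-(s • (Θ *ᵥ q)) + (-(2:ℝ) • (Θ * B)) *ᵥ z)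
    - (-(2:ℝ) • (Θ * B)).trace with hlin
  set quad : Vec d → ℝ := fun z => z ⬝ᵥ (0 + (Θ * B * Θᵀ) *ᵥ z) - (Θ * B * Θᵀ).trace with hquad
  have ew : ∀ z, wt h r q B z - wt h r q' B' z = lin z - quad z := fun z =>
    wt_expand h r p Γ S S' Θ eS hBt z
  have nquad : ∀ z, |quad z| ≤ a1 * δ ^ 2 * (1 + ‖z‖) ^ 2 := fun z => by
    refine (abs_affine_le 0 (Θ * B * Θᵀ) z).trans ?_
    gcongr
    rw [norm_zero, mul_zero, zero_add]
    have : ‖Θ * B * Θᵀ‖ ≤ d * (d * (θ * δ) * Q) * (θ * δ) := by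
      refine (norm_matmul_le _ _).trans ?_
      rw [norm_transpose]
      gcongr
      refine (norm_matmul_le _ _).trans ?_
      gcongr
      exact H.hB
    calc _ ≤ (d * d + d) * (d * (d * (θ * δ) * Q) * (θ * δ)) := by gcongr
      _ = _ := by rw [ha1]; ring
  have ndS : ‖S - S'‖ ≤ d * θ * Q * δ := by
    rw [eS, sub_add_cancel_left, norm_neg]
    refine (norm_matmul_le _ _).trans ?_
    calc _ ≤ d * (θ * δ) * Q := by gcongr
      _ = _ := by ring
  have nSΓ : ‖S * Γ‖ ≤ d * Q * Q := (norm_matmul_le _ _).trans (by gcongr)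
  have nSΓ' : ‖S' * Γ‖ ≤ d * Q * Q := (norm_matmul_le _ _).trans (by gcongr)
  have ndw : ∀ z, |wt h r q B z - wt h r q' B' z| ≤ a2 * δ * (1 + ‖z‖) ^ 2 := fun z => by
    rw [wt_sub]
    refine (abs_affine_le _ _ z).trans ?_
    gcongr
    have e1 : ‖s • (q - q')‖ ≤ s * (d * (d * θ * Q * δ) * Q) := by
      rw [norm_smul, Real.norm_of_nonneg s0, hq, hq', ← sub_mulVec]
      gcongr
      refine (norm_mulVec_le _ _).trans ?_
      gcongr
    have e2 : ‖B - B'‖ ≤ d * (d * (d * θ * Q * δ) * Q) * Q + d * (d * Q * Q) * (d * θ * Q * δ) := by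
      have : B - B' = (S - S') * Γ * Sᵀ + S' * Γ * (S - S')ᵀ := by
        rw [hB, hB', transpose_sub]; noncomm_ring
      rw [this]
      refine (norm_add_le _ _).trans ?_
      gcongr
      · refine (norm_matmul_le _ _).trans ?_
        rw [norm_transpose]
        gcongr
        refine (norm_matmul_le _ _).trans ?_
        gcongr
      · refine (norm_matmul_le _ _).trans ?_
        rw [norm_transpose]
        gcongr
    calc _ ≤ d * (s * (d * (d * θ * Q * δ) * Q)) + (d * d + d) *
          (d * (d * (d * θ * Q * δ) * Q) * Q + d * (d * Q * Q) * (d * θ * Q * δ)) := by gcongr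
      _ = _ := by rw [ha2]; ring
  have nw' : ∀ z, |wt h r q' B' z| ≤ a3 * (1 + ‖z‖) ^ 2 := fun z => by
    refine (abs_wt_le' _ _ _ _ z).trans ?_
    gcongr
    rw [norm_smul, Real.norm_of_nonneg s0, abs_mul, abs_of_pos hh, ha3]
    gcongr
    · exact H.hr
    · exact (norm_mulVec_le _ _).trans (by gcongr)
    · refine (norm_matmul_le _ _).trans ?_
      rw [norm_transpose]
      gcongr
  -- Gaussian integration by parts
  have dΨ : ∀ z, HasFDerivAt (fun z => ψ (X z))
      ((D (X z)).comp (s • (Matrix.mulVecLin (σ t x)).toContinuousLinearMap)) z := fun z => by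
    refine (P.hd (X z)).comp z ?_
    have : HasFDerivAt (fun z : Vec d => σ t x *ᵥ z)
        (Matrix.mulVecLin (σ t x)).toContinuousLinearMap z :=
      (Matrix.mulVecLin (σ t x)).toContinuousLinearMap.hasFDerivAt
    exact (this.const_smul s).const_add _
  have st := stein_affine (fun z => ψ (X z)) _ dΨ
    ((P.contD.comp cX).clm_comp continuous_const) (fun z => P.bdd _)
    (fun z => (ContinuousLinearMap.opNorm_comp_le _ _).trans
      (mul_le_mul_of_nonneg_right (P.norm_le hL (X z)) (norm_nonneg _)))
    (-(s • (Θ *ᵥ q))) (-(2:ℝ) • (Θ * B))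
  -- integrability
  have clin : Continuous lin := by rw [hlin]; unfold dotProduct; fun_prop
  have cψX : Continuous fun z => ψ (X z) := P.cont.comp cX
  have cψX' : Continuous fun z => ψ (X' z) := P.cont.comp cX'
  have i1 : Integrable (fun z => ψ (X z) * wt h r q B z) (gaussVec d 1) :=
    integrable_mul_wt H cψX (K := M) (k := 0) fun z => by simpa using P.bdd _
  have i2 : Integrable (fun z => ψ (X' z) * wt h r q' B' z) (gaussVec d 1) := by
    refine integrable_of_poly (cψX'.mul (continuous_wt _ _ _ _)) (M * a3) 2 fun z => ?_
    rw [abs_mul, mul_assoc]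
    exact mul_le_mul (P.bdd _) (nw' z) (abs_nonneg _) M0
  have i3 : Integrable (fun z => ψ (X z) * lin z) (gaussVec d 1) := by
    refine integrable_of_poly (cψX.mul clin) (M * (d * ‖-(s • (Θ *ᵥ q))‖
      + (d * d + d) * ‖-(2:ℝ) • (Θ * B)‖)) 2 fun z => ?_
    rw [abs_mul, mul_assoc]
    exact mul_le_mul (P.bdd _) (abs_affine_le _ _ z) (abs_nonneg _) M0
  set V : Vec d → Vec d := fun z => s • (σ t x *ᵥ (-(s • (Θ *ᵥ q)) + (-(2:ℝ) • (Θ * B)) *ᵥ z))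
    with hV
  have st' : ∫ z, ψ (X z) * lin z ∂gaussVec d 1 = ∫ z, D (X z) (V z) ∂gaussVec d 1 := st
  have cV : Continuous V := by rw [hV]; fun_prop
  have cDX : Continuous fun z => D (X z) := P.contD.comp cX
  have i4 : Integrable (fun z => D (X z) (V z)) (gaussVec d 1) := by
    refine integrable_of_poly (cDX.clm_apply cV) (L * (d + 1) * (s * (d * ‖σ t x‖ *
      (‖-(s • (Θ *ᵥ q))‖ + ‖(0 : Vec d)‖ + d * ‖-(2:ℝ) • (Θ * B)‖)))) 1 fun z => ?_
    refine ((D (X z)).le_opNorm (V z)).trans ?_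
    rw [mul_assoc, pow_one]
    refine mul_le_mul (P.norm_le hL _) ?_ (norm_nonneg _) (by positivity)
    have n1 : ‖-(s • (Θ *ᵥ q)) + (-(2:ℝ) • (Θ * B)) *ᵥ z‖ ≤
        (‖-(s • (Θ *ᵥ q))‖ + ‖(0 : Vec d)‖ + d * ‖-(2:ℝ) • (Θ * B)‖) * (1 + ‖z‖) := by
      simpa using norm_affine_le (-(s • (Θ *ᵥ q))) 0 (-(2:ℝ) • (Θ * B)) z
    calc ‖V z‖ = s * ‖σ t x *ᵥ (-(s • (Θ *ᵥ q)) + (-(2:ℝ) • (Θ * B)) *ᵥ z)‖ := by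
          rw [hV, norm_smul, Real.norm_of_nonneg s0]
      _ ≤ s * (d * ‖σ t x‖ * ((‖-(s • (Θ *ᵥ q))‖ + ‖(0 : Vec d)‖ + d * ‖-(2:ℝ) • (Θ * B)‖)
          * (1 + ‖z‖))) := by
          gcongr
          exact (norm_mulVec_le _ _).trans (by gcongr)
      _ = _ := by ring
  have im4 := integrable_one_add_norm_pow d 4
  -- the pointwise estimate
  have gv : ∀ z, V z + wt h r q B z • (X z - X' z) = gradVec h r q B (x - x') m Sg Ξ z :=
    fun z => by
    have ss : s * s = h := Real.mul_self_sqrt hh.le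
    have e1 : V z = -(h • (Ξ *ᵥ q)) - (2 * s) • (Ξ *ᵥ (B *ᵥ z)) := by
      have n1 : Ξ *ᵥ q = σ t x *ᵥ (Θ *ᵥ q) := (mulVec_mulVec q (σ t x) Θ).symm
      have n2 : Ξ *ᵥ (B *ᵥ z) = σ t x *ᵥ ((Θ * B) *ᵥ z) := by
        rw [← mulVec_mulVec z Θ B]
        exact (mulVec_mulVec _ (σ t x) Θ).symm
      simp only [hV]
      rw [n1, n2, mulVec_add, mulVec_neg, mulVec_smul, smul_mulVec, mulVec_smul, ← ss]
      module
    rw [dX, e1]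
    unfold gradVec
    abel
  have pt : ∀ z, ψ (X z) * wt h r q B z - ψ (X' z) * wt h r q' B' z ≤
      (ψ (X z) * lin z - D (X z) (V z)) + (L * U z
        + (M * a1 + L * (d + 1) * k1 * a2 + K * k1 ^ 2 * a3) * δ ^ 2 * (1 + ‖z‖) ^ 4) := fun z => by
    have z1 : 1 ≤ 1 + ‖z‖ := by linarith [norm_nonneg z]
    have eq1 : ψ (X z) * wt h r q B z - ψ (X' z) * wt h r q' B' z
        = (ψ (X z) * lin z - D (X z) (V z)) + D (X z) (gradVec h r q B (x - x') m Sg Ξ z)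
          + (-(ψ (X z) * quad z) + -(D (X z) (X z - X' z) * (wt h r q B z - wt h r q' B' z))
            + (ψ (X z) - ψ (X' z) - D (X z) (X z - X' z)) * wt h r q' B' z) := by
      rw [← gv, map_add, map_smul (D (X z)) (wt h r q B z), smul_eq_mul]
      linear_combination ψ (X z) * ew z
    have b1 : D (X z) (gradVec h r q B (x - x') m Sg Ξ z) ≤ L * U z :=
      (le_abs_self _).trans ((P.grad _ _).trans (mul_le_mul_of_nonneg_left (bU z) hL))
    have b2 : -(ψ (X z) * quad z) ≤ M * a1 * δ ^ 2 * (1 + ‖z‖) ^ 4 := by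
      refine (neg_le_abs _).trans ?_
      rw [abs_mul]
      calc _ ≤ M * (a1 * δ ^ 2 * (1 + ‖z‖) ^ 2) :=
            mul_le_mul (P.bdd _) (nquad z) (abs_nonneg _) M0
        _ ≤ M * (a1 * δ ^ 2 * (1 + ‖z‖) ^ 4) := by gcongr; norm_num
        _ = _ := by ring
    have b3 : -(D (X z) (X z - X' z) * (wt h r q B z - wt h r q' B' z))
        ≤ L * (d + 1) * k1 * a2 * δ ^ 2 * (1 + ‖z‖) ^ 4 := by
      refine (neg_le_abs _).trans ?_
      rw [abs_mul]
      have : |D (X z) (X z - X' z)| ≤ L * (d + 1) * (k1 * δ * (1 + ‖z‖)) :=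
        ((D (X z)).le_opNorm _).trans (mul_le_mul (P.norm_le hL _) (nX z) (norm_nonneg _)
          (by positivity))
      calc _ ≤ (L * (d + 1) * (k1 * δ * (1 + ‖z‖))) * (a2 * δ * (1 + ‖z‖) ^ 2) :=
            mul_le_mul this (ndw z) (abs_nonneg _) (by positivity)
        _ = L * (d + 1) * k1 * a2 * δ ^ 2 * (1 + ‖z‖) ^ 3 := by ring
        _ ≤ _ := by gcongr; norm_num
    have b4 : (ψ (X z) - ψ (X' z) - D (X z) (X z - X' z)) * wt h r q' B' z
        ≤ K * k1 ^ 2 * a3 * δ ^ 2 * (1 + ‖z‖) ^ 4 := by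
      refine (le_abs_self _).trans ?_
      rw [abs_mul]
      have : |ψ (X z) - ψ (X' z) - D (X z) (X z - X' z)| ≤ K * (k1 * δ * (1 + ‖z‖)) ^ 2 :=
        (P.taylor hK _ _).trans (by gcongr; exact nX z)
      calc _ ≤ K * (k1 * δ * (1 + ‖z‖)) ^ 2 * (a3 * (1 + ‖z‖) ^ 2) :=
            mul_le_mul this (nw' z) (abs_nonneg _) (by positivity)
        _ = _ := by ring
    rw [eq1]
    linarith
  have iR := (iU.const_mul L).add (im4.const_mul
    ((M * a1 + L * (d + 1) * k1 * a2 + K * k1 ^ 2 * a3) * δ ^ 2))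
  have key := integral_mono (i1.sub i2) ((i3.sub i4).add iR) pt
  rw [integral_sub' i1 i2, integral_add' (i3.sub i4) iR, integral_sub' i3 i4, st', sub_self,
    zero_add, integral_add' (iU.const_mul L) (im4.const_mul _), integral_const_mul,
    integral_const_mul] at key
  unfold linStep
  refine key.trans ?_
  have g : 5 * Q ^ 5 + 440 * (Q ^ 5) ^ 8 * ∫ z, (1 + ‖z‖) ^ 4 ∂gaussVec d 1 ≤ gr d (Q ^ 5) := by
    unfold gr
    have : 0 ≤ Q ^ 5 := by positivity
    linarith
  have : ∫ z, U z ∂gaussVec d 1 ≤ e2 (x - x') * (1 + gr d (Q ^ 5) * h) :=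
    IU.trans (by gcongr)
  have := mul_le_mul_of_nonneg_left this hL
  linarith

end

/-! ### From local to global Lipschitz bounds, and mollification -/

/-- Subdividing the segment from `y` to `x` removes a quadratic error. -/
lemma lip_of_local {d : ℕ} {f : Vec d → ℝ} {Λ R : ℝ}
    (hf : ∀ x x', f x - f x' ≤ Λ * e2 (x - x') + R * ‖x - x'‖ ^ 2) (x y : Vec d) :
    f x - f y ≤ Λ * e2 (x - y) := by
  have key : ∀ n : ℕ, f x - f y ≤ Λ * e2 (x - y) + R * ‖x - y‖ ^ 2 * (1 / ((n : ℝ) + 1)) := by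
    intro n
    have n0 : (0:ℝ) < (n : ℝ) + 1 := by positivity
    set c : ℝ := 1 / ((n : ℝ) + 1) with hc
    have c0 : 0 < c := by positivity
    have nc : ((n : ℝ) + 1) * c = 1 := by rw [hc]; field_simp
    set P : ℕ → Vec d := fun k => y + ((k : ℝ) * c) • (x - y) with hP
    have h1 : ∀ k ∈ Finset.range (n + 1), f (P (k + 1)) - f (P k) ≤
        Λ * (c * e2 (x - y)) + R * (c * ‖x - y‖) ^ 2 := fun k _ => by
      have e : P (k + 1) - P k = c • (x - y) := by
        simp only [hP]; push_cast; module
      have := hf (P (k + 1)) (P k)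
      rwa [e, e2_smul c0.le, norm_smul, Real.norm_of_nonneg c0.le] at this
    have h2 := Finset.sum_le_sum h1
    rw [Finset.sum_range_sub (fun k => f (P k)), Finset.sum_const, Finset.card_range,
      nsmul_eq_mul] at h2
    have e0 : P 0 = y := by simp [hP]
    have e1 : P (n + 1) = x := by simp only [hP]; push_cast; rw [nc]; module
    rw [e0, e1] at h2
    push_cast at h2
    refine h2.trans (le_of_eq ?_)
    linear_combination (Λ * e2 (x - y) + R * ‖x - y‖ ^ 2 * c) * nc
  have lim : Filter.Tendsto
      (fun n : ℕ => Λ * e2 (x - y) + R * ‖x - y‖ ^ 2 * (1 / ((n : ℝ) + 1)))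
      Filter.atTop (nhds (Λ * e2 (x - y) + R * ‖x - y‖ ^ 2 * 0)) :=
    (tendsto_one_div_add_atTop_nhds_zero_nat.const_mul _).const_add _
  have := ge_of_tendsto' lim key
  simpa using this

lemma e2_smul_abs {d : ℕ} (c : ℝ) (v : Vec d) : e2 (c • v) = |c| * e2 v := by
  unfold e2
  rw [smul_dotProduct, dotProduct_smul, smul_eq_mul, smul_eq_mul, ← mul_assoc,
    Real.sqrt_mul (mul_self_nonneg c), Real.sqrt_mul_self_eq_abs]

lemma continuous_of_e2_lip {d : ℕ} {ψ : Vec d → ℝ} {L : ℝ} (hL : 0 ≤ L)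
    (hψ : ∀ x y, |ψ x - ψ y| ≤ L * e2 (x - y)) : Continuous ψ := by
  have : LipschitzWith (L * (d + 1)).toNNReal ψ := LipschitzWith.of_dist_le_mul fun x y => by
    rw [Real.coe_toNNReal _ (by positivity), Real.dist_eq, dist_eq_norm, mul_assoc]
    exact (hψ x y).trans (by gcongr; exact e2_le _)
  exact this.continuous

/-- Bounded Lipschitz functions are uniform limits of smooth functions with the same bounds. -/
lemma exists_smooth {d : ℕ} {ψ : Vec d → ℝ} {M L : ℝ} (hL : 0 ≤ L) (hM : ∀ x, |ψ x| ≤ M)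
    (hψ : ∀ x y, |ψ x - ψ y| ≤ L * e2 (x - y)) {ε : ℝ} (hε : 0 < ε) :
    ∃ φ D K, 0 ≤ K ∧ Smooth φ D M L K ∧ ∀ x, |φ x - ψ x| ≤ ε := by
  have cψ := continuous_of_e2_lip hL hψ
  set ρ : ℝ := ε / (L * (d + 1) + 1) with hρ
  have ρ0 : 0 < ρ := by positivity
  let b : ContDiffBump (0 : Vec d) := ⟨ρ / 2, ρ, by positivity, by linarith⟩
  set η := b.normed (volume : Measure (Vec d)) with hη
  have η1 : ContDiff ℝ 1 η := b.contDiff_normed (n := 1)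
  have ηs : HasCompactSupport η := b.hasCompactSupport_normed
  have η0 : ∀ t, 0 ≤ η t := fun t => b.nonneg_normed t
  have ηI : ∫ t, η t = 1 := b.integral_normed
  have ηi : Integrable η := η1.continuous.integrable_of_hasCompactSupport ηs
  have lψ : LocallyIntegrable ψ := cψ.locallyIntegrable
  set φ : Vec d → ℝ := convolution η ψ (ContinuousLinearMap.lsmul ℝ ℝ) volume with hφ
  set D : Vec d → Vec d →L[ℝ] ℝ := fun x => convolution (fderiv ℝ η) ψ
    ((ContinuousLinearMap.lsmul ℝ ℝ).precompL (Vec d)) volume x with hD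
  have ex := ηs.convolutionExists_left (ContinuousLinearMap.lsmul ℝ ℝ) η1.continuous lψ
  have exi : ∀ x, Integrable (fun t => η t * ψ (x - t)) := fun x => ex x
  have eφ : ∀ x, φ x = ∫ t, η t * ψ (x - t) := fun x => rfl
  have dη : Continuous (fderiv ℝ η) := η1.continuous_fderiv (by norm_num)
  have dηs : HasCompactSupport (fderiv ℝ η) := ηs.fderiv ℝ
  have exD := dηs.convolutionExists_left ((ContinuousLinearMap.lsmul ℝ ℝ).precompL (Vec d)) dη lψ
  have idη : Integrable (fun t => ‖fderiv ℝ η t‖) :=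
    (dη.integrable_of_hasCompactSupport dηs).norm
  have hd : ∀ x, HasFDerivAt φ (D x) x := fun x =>
    ηs.hasFDerivAt_convolution_left (ContinuousLinearMap.lsmul ℝ ℝ) η1 lψ x
  have sub_le : ∀ x y, |φ x - φ y| ≤ L * e2 (x - y) := fun x y => by
    rw [eφ, eφ, ← integral_sub (exi x) (exi y), ← Real.norm_eq_abs]
    refine (norm_integral_le_of_norm_le (ηi.mul_const (L * e2 (x - y)))
      (Filter.Eventually.of_forall fun t => ?_)).trans (le_of_eq ?_)
    · rw [← mul_sub, norm_mul, Real.norm_of_nonneg (η0 t)]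
      refine mul_le_mul_of_nonneg_left ?_ (η0 t)
      have := hψ (x - t) (y - t)
      rwa [sub_sub_sub_cancel_right] at this
    · rw [integral_mul_const, ηI, one_mul]
  set Lc := (ContinuousLinearMap.lsmul ℝ ℝ : ℝ →L[ℝ] ℝ →L[ℝ] ℝ).precompL (Vec d) with hLc
  have Lc_apply : ∀ A c, Lc A c = c • A := fun A c => by
    ext v
    simp [hLc, ContinuousLinearMap.precompL_apply, mul_comm]
  refine ⟨φ, D, (∫ t, ‖fderiv ℝ η t‖) * (L * (d + 1)), ?_, ⟨?_, hd, ?_, ?_⟩, ?_⟩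
  · have : 0 ≤ ∫ t, ‖fderiv ℝ η t‖ := integral_nonneg fun t => norm_nonneg _
    positivity
  · intro x
    rw [eφ, ← Real.norm_eq_abs]
    refine (norm_integral_le_of_norm_le (ηi.mul_const M)
      (Filter.Eventually.of_forall fun t => ?_)).trans (le_of_eq ?_)
    · rw [norm_mul, Real.norm_of_nonneg (η0 t)]
      exact mul_le_mul_of_nonneg_left (hM _) (η0 t)
    · rw [integral_mul_const, ηI, one_mul]
  · intro x v
    have h1 : HasDerivAt (fun s : ℝ => x + s • v) v 0 := by
      simpa using ((hasDerivAt_id (0:ℝ)).smul_const v).const_add x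
    have h2 : HasFDerivAt φ (D x) (x + (0:ℝ) • v) := by simpa using hd x
    have h3 := h2.comp_hasDerivAt (0:ℝ) h1
    refine h3.le_of_lip' (mul_nonneg hL (e2_nonneg v)) (Filter.Eventually.of_forall fun s => ?_)
    have := sub_le (x + s • v) (x + (0:ℝ) • v)
    rw [add_sub_add_left_eq_sub, ← sub_smul, e2_smul_abs] at this
    refine this.trans (le_of_eq ?_)
    rw [Real.norm_eq_abs]; ring
  · intro x y
    have e : D x - D y = ∫ t, Lc (fderiv ℝ η t) (ψ (x - t) - ψ (y - t)) := by
      simp only [map_sub]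
      exact (integral_sub (exD x) (exD y)).symm
    rw [e]
    refine (norm_integral_le_of_norm_le (idη.const_mul (L * (d + 1) * ‖x - y‖))
      (Filter.Eventually.of_forall fun t => ?_)).trans (le_of_eq ?_)
    · rw [Lc_apply, norm_smul]
      have h1 := hψ (x - t) (y - t)
      rw [sub_sub_sub_cancel_right] at h1
      have h2 : ‖ψ (x - t) - ψ (y - t)‖ ≤ L * (d + 1) * ‖x - y‖ := by
        rw [mul_assoc]; exact h1.trans (by gcongr; exact e2_le _)
      gcongr
    · rw [integral_const_mul]; ring
  · intro x
    refine b.dist_normed_convolution_le cψ.aestronglyMeasurable fun y hy => ?_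
    rw [Real.dist_eq]
    have hy' : ‖y - x‖ ≤ ρ := by rw [← dist_eq_norm]; exact (Metric.mem_ball.1 hy).le
    calc _ ≤ L * e2 (y - x) := hψ y x
      _ ≤ L * ((d + 1) * ρ) := by
        gcongr; exact (e2_le _).trans (by gcongr)
      _ ≤ (L * (d + 1) + 1) * ρ := by nlinarith
      _ = ε := by rw [hρ]; field_simp

section
variable {d : ℕ} {Q : ℝ} {F : ℝ → Vec d → ℝ → Vec d → Mat d → ℝ}
    {μ : ℝ → Vec d → Vec d} {σ : ℝ → Vec d → Mat d}

lemma Coeff.step_lip_smooth (C : Coeff Q F μ σ) {h : ℝ} (t : ℝ) (hh : 0 < h) (hQ : h ≤ Q)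
    {ψ : Vec d → ℝ} {D : Vec d → Vec d →L[ℝ] ℝ} {M L K : ℝ}
    (P : Smooth ψ D M L K) (hL : 0 ≤ L) (hK : 0 ≤ K) (x y : Vec d) :
    step F μ σ h t ψ x - step F μ σ h t ψ y
      ≤ (L * (1 + gr d (Q ^ 5) * h) + Q * h) * e2 (x - y) := by
  have Q0 : 0 ≤ Q := zero_le_one.trans C.Q1
  obtain ⟨R, hR⟩ := C.linStep_local t hh P hL hK
  refine lip_of_local (R := R) (fun x x' => ?_) x y
  obtain ⟨r, p, Γ, hp, hΓ, H, hs⟩ := C.step_diff t hh hQ P.cont P.cont P.bdd P.bdd x x'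
  have h1 := hR x x' r p Γ hp hΓ H
  have h2 : h * (Q * ‖x - x'‖) ≤ h * (Q * e2 (x - x')) := by
    gcongr; exact norm_le_e2 _
  linarith

/-- One step of the scheme preserves Lipschitz continuity, increasing the constant only by a term
of order `h`. -/
lemma Coeff.step_lip (C : Coeff Q F μ σ) {h : ℝ} (t : ℝ) (hh : 0 < h) (hQ : h ≤ Q)
    {ψ : Vec d → ℝ} {M L : ℝ} (hL : 0 ≤ L) (hM : ∀ x, |ψ x| ≤ M)
    (hψ : ∀ x y, |ψ x - ψ y| ≤ L * e2 (x - y)) (x y : Vec d) :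
    |step F μ σ h t ψ x - step F μ σ h t ψ y|
      ≤ (L * (1 + gr d (Q ^ 5) * h) + Q * h) * e2 (x - y) := by
  have cψ := continuous_of_e2_lip hL hψ
  have g0 : 0 ≤ gr d Q := by linarith [le_gr d C.Q1, C.Q1]
  have main : ∀ x y, step F μ σ h t ψ x - step F μ σ h t ψ y
      ≤ (L * (1 + gr d (Q ^ 5) * h) + Q * h) * e2 (x - y) := fun x y => by
    refine le_of_forall_pos_le_add fun ε hε => ?_
    set ε' := ε / (2 * (1 + gr d Q * h)) with hε'
    have ε0 : 0 < ε' := by positivity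
    obtain ⟨φ, D, K, hK, P, hφ⟩ := exists_smooth hL hM hψ ε0
    have h1 := C.step_lip_smooth t hh hQ P hL hK x y
    have h2 := C.step_stab t hh hQ cψ P.cont hM P.bdd
      (fun z => (abs_sub_comm _ _).trans_le (hφ z)) x
    have h3 := C.step_stab t hh hQ P.cont cψ P.bdd hM hφ y
    have h4 : ε' * (1 + gr d Q * h) = ε / 2 := by rw [hε']; field_simp
    linarith
  rw [abs_le]
  have e : e2 (y - x) = e2 (x - y) := by
    have := e2_smul_abs (-1) (x - y)
    simpa using this
  have := main y x
  rw [e] at this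
  exact ⟨by linarith, main x y⟩

end

/-! ### Iterating the one-step estimates -/

section
variable {d : ℕ} {Q : ℝ} {F : ℝ → Vec d → ℝ → Vec d → Mat d → ℝ}
    {μ : ℝ → Vec d → Vec d} {σ : ℝ → Vec d → Mat d}

/-- A single rate dominating those of the sup-norm, Lipschitz and quadratic one-step estimates. -/
def rate (d : ℕ) (Q : ℝ) : ℝ := gr d Q + gr d (Q ^ 5) + Q

lemma rate_spec (hQ : 1 ≤ Q) :
    0 ≤ rate d Q ∧ gr d Q ≤ rate d Q ∧ gr d (Q ^ 5) ≤ rate d Q ∧ Q ≤ rate d Q := by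
  have h1 := le_gr d hQ
  have h5 : 1 ≤ Q ^ 5 := one_le_pow₀ hQ
  have h2 := le_gr d h5
  unfold rate
  refine ⟨?_, ?_, ?_, ?_⟩ <;> linarith

/-- Discrete Gronwall bounds for the sup norm and the Lipschitz constant of the scheme. -/
lemma Coeff.scheme_bounds (C : Coeff Q F μ σ) {T : ℝ} {g : Vec d → ℝ} {n : ℕ}
    (hh : 0 < T / n) (hQ : T / n ≤ Q) {M L : ℝ} (hM : ∀ x, |g x| ≤ M) (hL : 0 ≤ L)
    (hg : ∀ x y, |g x - g y| ≤ L * e2 (x - y)) (k : ℕ) :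
    (∀ x, |schemeAux T F μ σ g n k x| ≤ (M + 1) * (1 + rate d Q * (T / n)) ^ k - 1) ∧
    ∀ x y, |schemeAux T F μ σ g n k x - schemeAux T F μ σ g n k y|
      ≤ ((L + 1) * (1 + rate d Q * (T / n)) ^ k - 1) * e2 (x - y) := by
  obtain ⟨r0, r1, r2, r3⟩ := rate_spec (d := d) C.Q1
  have M0 : 0 ≤ M := (abs_nonneg _).trans (hM 0)
  have E1 : ∀ k, 1 ≤ (1 + rate d Q * (T / n)) ^ k := fun k => one_le_pow₀ (by nlinarith)
  induction k with
  | zero => exact ⟨fun x => by simpa [schemeAux] using hM x,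
      fun x y => by simpa [schemeAux] using hg x y⟩
  | succ k ih =>
    set G := rate d Q with hG
    set h := T / n with hhdef
    set Mk := (M + 1) * (1 + G * h) ^ k - 1 with hMk
    set Lk := (L + 1) * (1 + G * h) ^ k - 1 with hLk
    have Mk0 : 0 ≤ Mk := (abs_nonneg _).trans (ih.1 0)
    have Lk0 : 0 ≤ Lk := by nlinarith [E1 k]
    have cψ := continuous_of_e2_lip Lk0 ih.2
    have m1 : (M + 1) * (1 + G * h) ^ (k + 1) - 1 = Mk * (1 + G * h) + h * G := by
      rw [hMk]; ring
    have l1 : (L + 1) * (1 + G * h) ^ (k + 1) - 1 = Lk * (1 + G * h) + G * h := by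
      rw [hLk]; ring
    refine ⟨fun x => ?_, fun x y => ?_⟩
    · have := C.step_quad (T - (k + 1) * h) hh hQ cψ ih.1 Mk0 le_rfl (c := 0) 0
        (fun y => by simpa using ih.1 y) x
      rw [sub_zero, abs_zero, mul_zero, add_zero, zero_mul, add_zero] at this
      rw [m1]
      refine this.trans ?_
      gcongr
    · rw [l1]
      refine (C.step_lip (T - (k + 1) * h) hh hQ Lk0 ih.1 ih.2 x y).trans ?_
      have := e2_nonneg (x - y)
      gcongr

/-- A quadratic bound around a constant propagates through `k` steps of the scheme. -/
lemma Coeff.scheme_quad (C : Coeff Q F μ σ) {T : ℝ} {g : Vec d → ℝ} {n m : ℕ}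
    (hh : 0 < T / n) (hQ : T / n ≤ Q) {M L : ℝ} (hM : ∀ x, |g x| ≤ M) (hL : 0 ≤ L)
    (hg : ∀ x y, |g x - g y| ≤ L * e2 (x - y)) {A b c : ℝ} (hA : 0 ≤ A) (hb : 0 ≤ b) (x₀ : Vec d)
    (hq : ∀ y, |schemeAux T F μ σ g n m y - c| ≤ A + b * ((y - x₀) ⬝ᵥ (y - x₀))) (k : ℕ) :
    ∀ y, |schemeAux T F μ σ g n (m + k) y - c| ≤
      (A + k * (T / n) * (b * rate d Q + (Q + Q * |c|))) * (1 + rate d Q * (T / n)) ^ k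
        + b * (1 + rate d Q * (T / n)) ^ k * ((y - x₀) ⬝ᵥ (y - x₀)) := by
  obtain ⟨r0, r1, r2, r3⟩ := rate_spec (d := d) C.Q1
  have Q0 : 0 ≤ Q := zero_le_one.trans C.Q1
  induction k with
  | zero => simpa using hq
  | succ k ih =>
    obtain ⟨bM, bL⟩ := C.scheme_bounds hh hQ hM hL hg (m + k)
    have E1 : ∀ k, 1 ≤ (1 + rate d Q * (T / n)) ^ k := fun k => one_le_pow₀ (by nlinarith)
    have cψ := continuous_of_e2_lip (by nlinarith [E1 (m + k)]) bL
    intro y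
    set G := rate d Q with hG
    set h := T / n with hhdef
    set E := (1 + G * h) ^ k with hE
    set K := Q + Q * |c| with hK
    have E1k : 1 ≤ E := E1 k
    have K0 : 0 ≤ K := by positivity
    have s := C.step_quad (T - ((m + k : ℕ) + 1) * h) hh hQ cψ bM
      (A := (A + k * h * (b * G + K)) * E) (b := b * E) (by positivity) (by positivity) x₀ ih y
    have yy := dot_self_nonneg (y - x₀)
    refine s.trans ?_
    calc _ ≤ (A + k * h * (b * G + K)) * E * (1 + G * h)
          + b * E * ((1 + G * h) * ((y - x₀) ⬝ᵥ (y - x₀)) + G * h) + h * K := by gcongr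
      _ = (A + (k + 1) * h * (b * G + K)) * (E * (1 + G * h))
          + b * (E * (1 + G * h)) * ((y - x₀) ⬝ᵥ (y - x₀))
          - (h * b * G * E * (G * h) + h * K * (E - 1 + E * (G * h))) := by ring
      _ ≤ _ := by
        have p1 : 0 ≤ h * b * G * E * (G * h) := by positivity
        have p2 : 0 ≤ h * K * (E - 1 + E * (G * h)) := by
          have : 0 ≤ E - 1 := by linarith
          positivity
        push_cast
        rw [pow_succ]
        linarith

/-- Increments over `k` steps, starting after `m` steps. The quadratic bound is started from
`L |y - x| ≤ L √τ / 2 + L |y - x|² / (2 √τ)`, where `τ = k T / n`. -/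
lemma Coeff.scheme_holder (C : Coeff Q F μ σ) {T : ℝ} (hT : 0 < T) (hTQ : T ≤ Q) {g : Vec d → ℝ}
    {n m k : ℕ} (hn : 0 < n) (hmk : m + k ≤ n) {M L : ℝ} (hM : ∀ x, |g x| ≤ M) (hL : 0 ≤ L)
    (hg : ∀ x y, |g x - g y| ≤ L * e2 (x - y)) (x : Vec d) :
    |schemeAux T F μ σ g n (m + k) x - schemeAux T F μ σ g n m x| ≤
      ((L + 1) * exp (rate d Q * T) * (1 + rate d Q)
        + (Q + Q * ((M + 1) * exp (rate d Q * T))) * √T) * exp (rate d Q * T)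
          * √(k * (T / n)) := by
  obtain ⟨r0, r1, r2, r3⟩ := rate_spec (d := d) C.Q1
  have Q0 : 0 ≤ Q := zero_le_one.trans C.Q1
  have M0 : 0 ≤ M := (abs_nonneg _).trans (hM 0)
  rcases Nat.eq_zero_or_pos k with rfl | hk
  · simp
  have n0 : (0:ℝ) < n := by exact_mod_cast hn
  have hh : 0 < T / n := by positivity
  have hQ : T / n ≤ Q :=
    (div_le_self hT.le (by exact_mod_cast hn)).trans hTQ
  have hE : ∀ l ≤ n, (1 + rate d Q * (T / n)) ^ l ≤ exp (rate d Q * T) := fun l hl => by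
    have h1 : 1 + rate d Q * (T / n) ≤ exp (rate d Q * (T / n)) := by
      linarith [Real.add_one_le_exp (rate d Q * (T / n))]
    calc _ ≤ exp (rate d Q * (T / n)) ^ l := by gcongr
      _ = exp (l * (rate d Q * (T / n))) := (Real.exp_nat_mul _ _).symm
      _ ≤ exp (n * (rate d Q * (T / n))) := by gcongr
      _ = _ := by congr 1; field_simp
  obtain ⟨bM, bL⟩ := C.scheme_bounds hh hQ hM hL hg m
  set G := rate d Q with hG
  set h := T / n with hhdef
  set E := exp (G * T) with hEdef
  set Λ := (L + 1) * E with hΛ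
  set τ := k * h with hτ
  have k0 : (0:ℝ) < k := by exact_mod_cast hk
  have τ0 : 0 < τ := by positivity
  have τT : τ ≤ T := by
    have : (k:ℝ) ≤ n := by exact_mod_cast (le_add_self.trans hmk)
    calc τ ≤ n * h := by rw [hτ]; gcongr
      _ = T := by rw [hhdef]; field_simp
  set ε := √τ with hε
  have ε0 : 0 < ε := Real.sqrt_pos.2 τ0
  have εε : ε * ε = τ := Real.mul_self_sqrt τ0.le
  have εT : ε ≤ √T := Real.sqrt_le_sqrt τT
  have Λ0 : 0 ≤ Λ := by positivity
  set c := schemeAux T F μ σ g n m x with hc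
  have c1 : |c| ≤ (M + 1) * E := by
    refine (bM x).trans ?_
    have : (M + 1) * (1 + G * h) ^ m ≤ (M + 1) * E := by gcongr; exact hE m (by omega)
    linarith
  have q0 : ∀ y, |schemeAux T F μ σ g n m y - c| ≤
      Λ * ε / 2 + Λ / (2 * ε) * ((y - x) ⬝ᵥ (y - x)) := fun y => by
    have e0 := e2_nonneg (y - x)
    have h1 : |schemeAux T F μ σ g n m y - c| ≤ Λ * e2 (y - x) := by
      refine (bL y x).trans ?_
      gcongr
      have : (L + 1) * (1 + G * h) ^ m ≤ (L + 1) * E := by gcongr; exact hE m (by omega)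
      linarith
    refine h1.trans ?_
    rw [← e2_sq]
    have : Λ * ε / 2 + Λ / (2 * ε) * e2 (y - x) ^ 2 - Λ * e2 (y - x)
        = Λ / (2 * ε) * (ε - e2 (y - x)) ^ 2 := by field_simp; ring
    have p : 0 ≤ Λ / (2 * ε) * (ε - e2 (y - x)) ^ 2 := by positivity
    linarith
  have key := C.scheme_quad hh hQ hM hL hg (by positivity) (by positivity) x q0 k x
  rw [sub_self, zero_dotProduct, mul_zero, add_zero] at key
  refine key.trans ?_
  calc _ ≤ (Λ * ε / 2 + τ * (Λ / (2 * ε) * G + (Q + Q * ((M + 1) * E)))) * E := by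
        gcongr
        exact hE k (by omega)
    _ = (Λ / 2 * (1 + G) + (Q + Q * ((M + 1) * E)) * ε) * E * ε := by
        rw [← εε]; field_simp; ring
    _ ≤ _ := by
        gcongr
        linarith

end

/-- Uniform 1/2-Hölder continuity in time of the discrete-time approximations
(Corollary 3.21 of the paper): `|v^h(t_i,x) − v^h(t_j,x)| ≤ C (t_j − t_i)^{1/2}`
with `C` independent of `n`. -/
theorem scheme_time_holder
    (d : ℕ) (T : ℝ) (hT : 0 < T)
    (μ : ℝ → Vec d → Vec d) (σ : ℝ → Vec d → Mat d)
    (hμbdd : ∃ C : ℝ, ∀ s y, ‖μ s y‖ ≤ C)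
    (hσbdd : ∃ C : ℝ, ∀ s y, ‖σ s y‖ ≤ C)
    (hμreg : ∃ L : ℝ, ∀ s s' : ℝ, ∀ y y' : Vec d,
      ‖μ s y - μ s' y'‖ ≤ L * (‖y - y'‖ + Real.sqrt |s - s'|))
    (hσreg : ∃ L : ℝ, ∀ s s' : ℝ, ∀ y y' : Vec d,
      ‖σ s y - σ s' y'‖ ≤ L * (‖y - y'‖ + Real.sqrt |s - s'|))
    (hσinv : ∀ s y, IsUnit (σ s y).det)
    (hσinvbdd : ∃ C : ℝ, ∀ s y, ‖(σ s y)⁻¹‖ ≤ C)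
    (F Fr : ℝ → Vec d → ℝ → Vec d → Mat d → ℝ)
    (Fp : ℝ → Vec d → ℝ → Vec d → Mat d → Vec d)
    (Fγ : ℝ → Vec d → ℝ → Vec d → Mat d → Mat d)
    (hF : AssumptionF d σ F Fr Fp Fγ)
    (g : Vec d → ℝ) (hgbdd : ∃ Cg : ℝ, ∀ x, |g x| ≤ Cg)
    (hglip : ∃ Lg : NNReal, LipschitzWith Lg g) :
    ∃ C > (0 : ℝ), ∀ n : ℕ, 0 < n → ∀ i j : ℕ, i ≤ j → j ≤ n → ∀ x : Vec d,
      |vh T F μ σ g n i x - vh T F μ σ g n j x|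
        ≤ C * Real.sqrt (j * (T / n) - i * (T / n)) := by
  obtain ⟨Q, hTQ, C⟩ := exists_coeff T hT μ σ hμbdd hσbdd hμreg hσreg hσinv hσinvbdd F Fr Fp Fγ hF
  obtain ⟨M, hM⟩ := hgbdd
  obtain ⟨L, hL⟩ := hglip
  have M0 : 0 ≤ M := (abs_nonneg _).trans (hM 0)
  have Q0 : 0 < Q := hT.trans_le hTQ
  have r0 := (rate_spec (d := d) C.Q1).1
  have hg : ∀ x y, |g x - g y| ≤ L * e2 (x - y) := fun x y => by
    have := hL.dist_le_mul x y
    rw [Real.dist_eq, dist_eq_norm] at this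
    exact this.trans (by gcongr; exact norm_le_e2 _)
  refine ⟨(((L : ℝ) + 1) * exp (rate d Q * T) * (1 + rate d Q)
    + (Q + Q * ((M + 1) * exp (rate d Q * T))) * √T) * exp (rate d Q * T), by positivity,
    fun n hn i j hij hj x => ?_⟩
  have key := C.scheme_holder hT hTQ (m := n - j) (k := j - i) hn (by omega) hM L.2 hg x
  rw [Nat.cast_sub hij, sub_mul, show n - j + (j - i) = n - i by omega] at key
  exact key

end
end

section
/- Assume F satisfies Assumption F and in addition the strict monotonicity condition: at every point, F_r + F_p·w + wᵀ F_γ w ≥ 0 for all w ∈ ℝ^d. Then the operator T_h is monotone: for all bounded measurable functions φ, ψ : [0,T]×ℝ^d → ℝ with φ ≤ ψ everywhere, all h > 0 and all (t,x) with t + h ≤ T, one has T_h[φ](t,x) ≤ T_h[ψ](t,x). -/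
/-!
Fix `(t, x)` and put `δ = ψ (t + h) - φ (t + h) ≥ 0`. By the mean value theorem applied to `F` in
`(r, p, γ)` along the segment joining the arguments of `F` in the two operators, the difference
`T_h[ψ] - T_h[φ]` equals `E[δ] + h (F_r E[δ] + F_p · E[δ H₁] + F_γ : E[δ H₂])`, with the
derivatives taken at one intermediate point (`mean_value`). By linearity this is the expectation of
`δ (1 + h (F_r + F_p · H₁ + F_γ : H₂))`. With `v = H₁`, one has `H₂ = v vᵀ - a⁻¹ / h` (`H2w_eq`),
so the bracket is `1 - Tr (a⁻¹ F_γ) + h (F_r + F_p · v + vᵀ F_γ v)`, which is nonnegative by the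
trace bound and the strict monotonicity condition (`weight_nonneg`).
-/

open MeasureTheory ProbabilityTheory Matrix Real Set Function

noncomputable section

attribute [local instance] Matrix.normedAddCommGroup Matrix.normedSpace

lemma H2w_eq {d : ℕ} (σ : ℝ → Vec d → Mat d) (h t : ℝ) (hh : 0 < h) (x w : Vec d) :
    H2w σ h t x w = vecMulVec (H1w σ h t x w) (H1w σ h t x w)
      - (1 / h) • (σ t x * (σ t x)ᵀ)⁻¹ := by
  have e1 : (σ t x)ᵀ⁻¹ * vecMulVec w w * (σ t x)⁻¹
      = vecMulVec ((σ t x)ᵀ⁻¹ *ᵥ w) ((σ t x)ᵀ⁻¹ *ᵥ w) := by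
    rw [mul_vecMulVec, vecMulVec_mul, ← Matrix.mulVec_transpose, Matrix.transpose_nonsing_inv]
  have e2 : (σ t x)ᵀ⁻¹ * (h • (1 : Mat d)) * (σ t x)⁻¹ = h • (σ t x * (σ t x)ᵀ)⁻¹ := by
    rw [Matrix.mul_inv_rev]; simp
  unfold H2w H1w
  rw [mul_sub, sub_mul, e1, e2]
  ext i j
  simp only [Matrix.smul_apply, Matrix.sub_apply, vecMulVec_apply, Pi.smul_apply, smul_eq_mul]
  field_simp

/-- The density multiplying `δ` in the difference of the two operators is nonnegative. -/
lemma weight_nonneg {d : ℕ} (σ : ℝ → Vec d → Mat d) (h t : ℝ) (hh : 0 < h) (x w : Vec d)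
    (r : ℝ) (p : Vec d) (G : Mat d) (hG : G.PosSemidef)
    (htr : ((σ t x * (σ t x)ᵀ)⁻¹ * G).trace ≤ 1)
    (hmono : ∀ v : Vec d, r + p ⬝ᵥ v + v ⬝ᵥ G.mulVec v ≥ 0) :
    0 ≤ 1 + h * (r + p ⬝ᵥ H1w σ h t x w + ∑ i, ∑ j, G i j * H2w σ h t x w i j) := by
  have hsymm : ∀ i j, G i j = G j i := fun i j => by
    simpa using (hG.isHermitian.apply i j).symm
  have e : ∑ i, ∑ j, G i j * H2w σ h t x w i j
      = H1w σ h t x w ⬝ᵥ G.mulVec (H1w σ h t x w)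
        - (1 / h) * ((σ t x * (σ t x)ᵀ)⁻¹ * G).trace := by
    rw [H2w_eq σ h t hh x w]
    simp only [dotProduct, mulVec, Matrix.trace, Matrix.diag, Matrix.mul_apply,
      Matrix.sub_apply, Matrix.smul_apply, vecMulVec_apply, smul_eq_mul, Finset.mul_sum,
      ← Finset.sum_sub_distrib]
    refine Finset.sum_congr rfl fun i _ => Finset.sum_congr rfl fun j _ => ?_
    rw [hsymm j i]; ring
  have hv := hmono (H1w σ h t x w)
  rw [e]
  have : 1 + h * (r + p ⬝ᵥ H1w σ h t x w + (H1w σ h t x w ⬝ᵥ G.mulVec (H1w σ h t x w)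
        - (1 / h) * ((σ t x * (σ t x)ᵀ)⁻¹ * G).trace))
      = (1 - ((σ t x * (σ t x)ᵀ)⁻¹ * G).trace)
        + h * (r + p ⬝ᵥ H1w σ h t x w + H1w σ h t x w ⬝ᵥ G.mulVec (H1w σ h t x w)) := by
    field_simp
    ring
  rw [this]
  have := mul_nonneg hh.le hv
  linarith

instance gaussVec_isProbabilityMeasure (d : ℕ) (h : ℝ) : IsProbabilityMeasure (gaussVec d h) := by
  unfold gaussVec; infer_instance

lemma memLp_coord (d : ℕ) (h : ℝ) (i : Fin d) :
    MemLp (fun w : Vec d => w i) 2 (gaussVec d h) :=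
  (memLp_id_gaussianReal (μ := 0) (v := h.toNNReal) 2).comp_measurePreserving
    (measurePreserving_eval (fun _ : Fin d => gaussianReal 0 h.toNNReal) i)

lemma memLp_H1w {d : ℕ} (σ : ℝ → Vec d → Mat d) (h t : ℝ) (x : Vec d) (i : Fin d) :
    MemLp (fun w => H1w σ h t x w i) 2 (gaussVec d h) := by
  simp only [H1w, Pi.smul_apply, mulVec, dotProduct, smul_eq_mul]
  exact (memLp_finsetSum _ fun j _ => (memLp_coord d h j).const_mul _).const_mul _

lemma integrable_H2w {d : ℕ} (σ : ℝ → Vec d → Mat d) (h t : ℝ) (hh : 0 < h) (x : Vec d)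
    (i j : Fin d) : Integrable (fun w => H2w σ h t x w i j) (gaussVec d h) := by
  simp only [H2w_eq σ h t hh x, Matrix.sub_apply, vecMulVec_apply]
  exact ((memLp_H1w σ h t x i).integrable_mul (memLp_H1w σ h t x j)).sub (integrable_const _)

/-- Mean value theorem for `F t x` in the variables `(r, p, γ)`. -/
lemma mean_value {d : ℕ} {σ : ℝ → Vec d → Mat d}
    {F Fr : ℝ → Vec d → ℝ → Vec d → Mat d → ℝ}
    {Fp : ℝ → Vec d → ℝ → Vec d → Mat d → Vec d}
    {Fγ : ℝ → Vec d → ℝ → Vec d → Mat d → Mat d}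
    (hF : AssumptionF d σ F Fr Fp Fγ) (t : ℝ) (x : Vec d)
    (r r' : ℝ) (p p' : Vec d) (γ γ' : Mat d) :
    ∃ r₀ p₀ γ₀, F t x r' p' γ' - F t x r p γ
      = Fr t x r₀ p₀ γ₀ * (r' - r) + Fp t x r₀ p₀ γ₀ ⬝ᵥ (p' - p)
        + ∑ i, ∑ j, Fγ t x r₀ p₀ γ₀ i j * (γ' - γ) i j := by
  obtain ⟨z, -, hz⟩ := domain_mvt (s := univ) (x := (r, p, γ)) (y := (r', p', γ'))
    (f := fun q : ℝ × Vec d × Mat d => F t x q.1 q.2.1 q.2.2)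
    (f' := fun q => fderiv ℝ (fun q : ℝ × Vec d × Mat d => F t x q.1 q.2.1 q.2.2) q)
    (fun q _ => (hF.differentiable t x q.1 q.2.1 q.2.2).hasFDerivAt.hasFDerivWithinAt)
    convex_univ (mem_univ _) (mem_univ _)
  exact ⟨z.1, z.2.1, z.2.2, hz.trans (hF.deriv_eq t x z.1 z.2.1 z.2.2 _)⟩

/-- Under Assumption F and the strict monotonicity condition
`F_r + F_p·w + wᵀ F_γ w ≥ 0`, the operator `T_h` is monotone:
`φ ≤ ψ` implies `T_h[φ] ≤ T_h[ψ]`. -/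
theorem Th_monotone
    (d : ℕ) (T : ℝ) (hT : 0 < T)
    (μ : ℝ → Vec d → Vec d) (σ : ℝ → Vec d → Mat d)
    (hμmeas : ∀ i, Measurable fun q : ℝ × Vec d => μ q.1 q.2 i)
    (hσmeas : ∀ i j, Measurable fun q : ℝ × Vec d => σ q.1 q.2 i j)
    (hμbdd : ∃ C : ℝ, ∀ s y, ‖μ s y‖ ≤ C)
    (hσbdd : ∃ C : ℝ, ∀ s y, ‖σ s y‖ ≤ C)
    (hσinv : ∀ s y, IsUnit (σ s y).det)
    (F Fr : ℝ → Vec d → ℝ → Vec d → Mat d → ℝ)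
    (Fp : ℝ → Vec d → ℝ → Vec d → Mat d → Vec d)
    (Fγ : ℝ → Vec d → ℝ → Vec d → Mat d → Mat d)
    (hF : AssumptionF d σ F Fr Fp Fγ)
    (hstrict : ∀ t x r p γ (w : Vec d),
      Fr t x r p γ + Fp t x r p γ ⬝ᵥ w + w ⬝ᵥ (Fγ t x r p γ).mulVec w ≥ 0) :
    ∀ φ ψ : ℝ → Vec d → ℝ,
      (∃ Cb : ℝ, ∀ t ∈ Icc (0 : ℝ) T, ∀ x, |φ t x| ≤ Cb ∧ |ψ t x| ≤ Cb) →
      Measurable (fun q : ℝ × Vec d => φ q.1 q.2) →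
      Measurable (fun q : ℝ × Vec d => ψ q.1 q.2) →
      (∀ t ∈ Icc (0 : ℝ) T, ∀ x, φ t x ≤ ψ t x) →
      ∀ h : ℝ, 0 < h → ∀ t : ℝ, 0 ≤ t → t + h ≤ T → ∀ x : Vec d,
        Th F μ σ φ h t x ≤ Th F μ σ ψ h t x := by
  intro φ ψ ⟨C, hC⟩ hφ hψ hle h hh t ht0 htT x
  have htm : t + h ∈ Icc (0 : ℝ) T := ⟨by linarith, htT⟩
  have hcont : Continuous fun w => euler μ σ h t x w := by
    unfold euler; fun_prop
  have hmeas : ∀ f : ℝ → Vec d → ℝ, Measurable (fun q : ℝ × Vec d => f q.1 q.2) →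
      AEStronglyMeasurable (fun w => f (t + h) (euler μ σ h t x w)) (gaussVec d h) := fun f hf =>
    (hf.comp (measurable_const.prodMk hcont.measurable)).aestronglyMeasurable
  set u : Vec d → ℝ := fun w => φ (t + h) (euler μ σ h t x w) with hu
  set v : Vec d → ℝ := fun w => ψ (t + h) (euler μ σ h t x w) with hv
  have hub : ∀ g : Vec d → ℝ, Integrable g (gaussVec d h) →
      Integrable (fun w => u w * g w) (gaussVec d h) := fun g hg =>
    hg.bdd_mul (c := C) (hmeas φ hφ) (.of_forall fun w => (hC _ htm _).1)
  have hvb : ∀ g : Vec d → ℝ, Integrable g (gaussVec d h) →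
      Integrable (fun w => v w * g w) (gaussVec d h) := fun g hg =>
    hg.bdd_mul (c := C) (hmeas ψ hψ) (.of_forall fun w => (hC _ htm _).2)
  have hdb : ∀ g : Vec d → ℝ, Integrable g (gaussVec d h) →
      Integrable (fun w => (v w - u w) * g w) (gaussVec d h) := fun g hg => by
    simp only [sub_mul]; exact (hvb g hg).sub (hub g hg)
  have hsub : ∀ g : Vec d → ℝ, Integrable g (gaussVec d h) →
      ∫ w, v w * g w ∂gaussVec d h - ∫ w, u w * g w ∂gaussVec d h
        = ∫ w, (v w - u w) * g w ∂gaussVec d h := fun g hg => by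
    rw [← integral_sub (hvb g hg) (hub g hg)]; simp only [sub_mul]
  have h1 : ∀ i, Integrable (fun w => H1w σ h t x w i) (gaussVec d h) := fun i =>
    (memLp_H1w σ h t x i).integrable (by norm_num)
  have h2 := integrable_H2w σ h t hh x
  have h0 : Integrable (fun _ : Vec d => (1 : ℝ)) (gaussVec d h) := integrable_const _
  have hsub0 : ∫ w, v w ∂gaussVec d h - ∫ w, u w ∂gaussVec d h
      = ∫ w, (v w - u w) ∂gaussVec d h := by simpa using hsub _ h0
  have hd0 : Integrable (fun w => v w - u w) (gaussVec d h) := by simpa using hdb _ h0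
  obtain ⟨r₀, p₀, γ₀, hmv⟩ := mean_value hF t x
    (∫ w, u w ∂gaussVec d h) (∫ w, v w ∂gaussVec d h)
    (fun i => ∫ w, u w * H1w σ h t x w i ∂gaussVec d h)
    (fun i => ∫ w, v w * H1w σ h t x w i ∂gaussVec d h)
    (Matrix.of fun i j => ∫ w, u w * H2w σ h t x w i j ∂gaussVec d h)
    (Matrix.of fun i j => ∫ w, v w * H2w σ h t x w i j ∂gaussVec d h)
  have hdot : Fp t x r₀ p₀ γ₀ ⬝ᵥ ((fun i => ∫ w, v w * H1w σ h t x w i ∂gaussVec d h)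
        - fun i => ∫ w, u w * H1w σ h t x w i ∂gaussVec d h)
      = ∑ i, Fp t x r₀ p₀ γ₀ i * ∫ w, (v w - u w) * H1w σ h t x w i ∂gaussVec d h := by
    refine Finset.sum_congr rfl fun i _ => ?_
    rw [Pi.sub_apply, hsub _ (h1 i)]
  simp only [hdot, Matrix.sub_apply, Matrix.of_apply, hsub _ (h2 _ _), hsub0] at hmv
  have hkey : ∫ w, (v w - u w) * (1 + h * (Fr t x r₀ p₀ γ₀ + Fp t x r₀ p₀ γ₀ ⬝ᵥ H1w σ h t x w
        + ∑ i, ∑ j, Fγ t x r₀ p₀ γ₀ i j * H2w σ h t x w i j)) ∂gaussVec d h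
      = ∫ w, (v w - u w) ∂gaussVec d h
        + h * (Fr t x r₀ p₀ γ₀ * ∫ w, (v w - u w) ∂gaussVec d h
          + ∑ i, Fp t x r₀ p₀ γ₀ i * ∫ w, (v w - u w) * H1w σ h t x w i ∂gaussVec d h
          + ∑ i, ∑ j, Fγ t x r₀ p₀ γ₀ i j
              * ∫ w, (v w - u w) * H2w σ h t x w i j ∂gaussVec d h) := by
    have i1 : ∀ i, Integrable (fun w => Fp t x r₀ p₀ γ₀ i * ((v w - u w) * H1w σ h t x w i))
        (gaussVec d h) := fun i => (hdb _ (h1 i)).const_mul _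
    have i2 : ∀ i j, Integrable
        (fun w => Fγ t x r₀ p₀ γ₀ i j * ((v w - u w) * H2w σ h t x w i j))
        (gaussVec d h) := fun i j => (hdb _ (h2 i j)).const_mul _
    have s1 := integrable_finsetSum Finset.univ fun i _ => i1 i
    have s2' := fun i => integrable_finsetSum Finset.univ fun j _ => i2 i j
    have s2 := integrable_finsetSum Finset.univ fun i _ => s2' i
    have s0 := hd0.const_mul (Fr t x r₀ p₀ γ₀)
    simp only [← integral_const_mul (Fr t x r₀ p₀ γ₀), ← integral_const_mul (Fp t x r₀ p₀ γ₀ _),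
      ← integral_const_mul (Fγ t x r₀ p₀ γ₀ _ _)]
    simp only [← integral_finsetSum Finset.univ fun j _ => i2 _ j]
    rw [← integral_finsetSum Finset.univ fun i _ => i1 i,
      ← integral_finsetSum Finset.univ fun i _ => s2' i,
      ← integral_add s0 s1, ← integral_add (s0.fun_add s1) s2, ← integral_const_mul,
      ← integral_add hd0 (((s0.fun_add s1).fun_add s2).const_mul h)]
    refine integral_congr_ae (.of_forall fun w => ?_)
    have a1 : ∑ i, Fp t x r₀ p₀ γ₀ i * ((v w - u w) * H1w σ h t x w i)
        = (v w - u w) * (Fp t x r₀ p₀ γ₀ ⬝ᵥ H1w σ h t x w) := by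
      simp only [dotProduct, Finset.mul_sum, mul_left_comm]
    have a2 : ∑ i, ∑ j, Fγ t x r₀ p₀ γ₀ i j * ((v w - u w) * H2w σ h t x w i j)
        = (v w - u w) * ∑ i, ∑ j, Fγ t x r₀ p₀ γ₀ i j * H2w σ h t x w i j := by
      simp only [Finset.mul_sum, mul_left_comm]
    simp only [a1, a2]
    ring
  have hpos : 0 ≤ ∫ w, (v w - u w) * (1 + h * (Fr t x r₀ p₀ γ₀
      + Fp t x r₀ p₀ γ₀ ⬝ᵥ H1w σ h t x w
      + ∑ i, ∑ j, Fγ t x r₀ p₀ γ₀ i j * H2w σ h t x w i j)) ∂gaussVec d h := by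
    refine integral_nonneg fun w => mul_nonneg (sub_nonneg.2 (hle _ htm (euler μ σ h t x w))) ?_
    exact weight_nonneg σ h t hh x w _ _ _ (hF.psd t x r₀ p₀ γ₀)
      (hF.trace_le_one t x r₀ p₀ γ₀) (hstrict t x r₀ p₀ γ₀)
  rw [hkey, ← hmv, ← hsub0] at hpos
  unfold Th step
  linarith

end
end
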